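/- (Vanishing of the Pohozaev term.) Under the blow-up setup, for every ε' ∈ (0, 1/4) the quantity J'_i := δ_i ∫_{B(x_i, δ_i ε')} ∂₁u_i(y) · V_i(y) e^{u_i(y)} dy tends to 0 as i → ∞. -/

import Mathlib

open MeasureTheory Filter Metric

abbrev E2 := EuclideanSpace ℝ (Fin 2)

noncomputable def pd (j : Fin 2) (u : E2 → ℝ) (x : E2) : ℝ :=
  fderiv ℝ u x (EuclideanSpace.single j 1)

noncomputable def lapl (u : E2 → ℝ) (x : E2) : ℝ :=
  pd 0 (pd 0 u) x + pd 1 (pd 1 u) x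

/-!
Recentre at `x i`, without rescaling: on `ball 0 R`, `R = δ i / 2`, the translate `U` satisfies
`0 ≤ -ΔU ≤ b * exp U`, is maximal at `0` with `exp (U 0) = r⁻²`, and is bounded on the boundary.
Comparing `U` with the logarithmic potential of `f = -ΔU` bounds `U x - U 0` by
`(2π)⁻¹ * ∫ (log ‖y‖ - log ‖x - y‖) * f y`. If `f` has mass `2π * a` in `ball 0 (K * r)`,
Jensen's inequality for `exp` (as in Brezis–Merle) turns this into integral decay of
`exp U` like `r ^ (a - 2) * ‖x‖ ^ (-a)`.

The circle means of `U` are bounded below by the mass alone, so `∫ exp U ≤ C₀` forces almost `4π`,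
hence by the decay almost all of the `8π`, of mass into `ball 0 (K * r)`: the exponent `a` may be
taken close to `4`. Since `U ≥ 0`, the decay gives `R * r ^ (s - 1) → 0` for `s > 1 / 2`, and
`∫ ‖x‖ ^ (2 * s) * exp U = O(r ^ (2 * s))` for `s < 1`, while testing the equation with
a cut-off of `exp U` gives `∫ ‖∇U‖ ^ 2 * exp U = O(r⁻²)`.

Finally split `V = V (x i) + (V - V (x i))` in the Pohozaev term. The constant part integrates to
a boundary term, and by AM–GM the Hölder part is at most a constant times
`r ^ (1 + s) * ∫ ‖∇U‖ ^ 2 * exp U + r ^ (-1 - s) * ∫ ‖x‖ ^ (2 * s) * exp U = O(r ^ (s - 1))`.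
-/

section Blowup

open Real Set

/-! ### Polar coordinates and the divergence theorem on discs -/

/-- The unit vector `(cos θ, sin θ)`. -/
noncomputable def unitVec (θ : ℝ) : E2 :=
  cos θ • EuclideanSpace.single 0 1 + sin θ • EuclideanSpace.single 1 1

/-- The unit vector `(-sin θ, cos θ)`, tangent to the unit circle at `unitVec θ`. -/
noncomputable def unitTangent (θ : ℝ) : E2 :=
  (-sin θ) • EuclideanSpace.single 0 1 + cos θ • EuclideanSpace.single 1 1

lemma hasDerivAt_unitVec (θ : ℝ) : HasDerivAt unitVec (unitTangent θ) θ :=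
  ((hasDerivAt_cos θ).smul_const _).add ((hasDerivAt_sin θ).smul_const _)

lemma hasDerivAt_unitTangent (θ : ℝ) : HasDerivAt unitTangent (-unitVec θ) θ := by
  refine (((hasDerivAt_sin θ).neg.smul_const _).add
    ((hasDerivAt_cos θ).smul_const _)).congr_deriv ?_
  unfold unitVec
  module

@[fun_prop]
lemma continuous_unitVec : Continuous unitVec := by
  unfold unitVec
  fun_prop

@[fun_prop]
lemma continuous_unitTangent : Continuous unitTangent := by
  unfold unitTangent
  fun_prop

@[simp]
lemma norm_unitVec (θ : ℝ) : ‖unitVec θ‖ = 1 := by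
  simp [EuclideanSpace.norm_eq, unitVec]

lemma norm_smul_unitVec {t : ℝ} (ht : 0 ≤ t) (θ : ℝ) : ‖t • unitVec θ‖ = t := by
  rw [norm_smul, norm_unitVec, mul_one, norm_of_nonneg ht]

lemma add_smul_unitVec_mem_sphere (x : E2) {t : ℝ} (ht : 0 ≤ t) (θ : ℝ) :
    x + t • unitVec θ ∈ sphere x t := by
  rw [mem_sphere, dist_self_add_left, norm_smul_unitVec ht]

lemma add_smul_unitVec_mem_closedBall (x : E2) {t : ℝ} (ht : 0 ≤ t) (θ : ℝ) :
    x + t • unitVec θ ∈ closedBall x t :=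
  sphere_subset_closedBall (add_smul_unitVec_mem_sphere x ht θ)

lemma integral_inner_unitVec (v : E2) : ∫ θ in -π..π, inner ℝ v (unitVec θ) = 0 := by
  simp only [unitVec, inner_add_right, inner_smul_right]
  rw [intervalIntegral.integral_add (Continuous.intervalIntegrable (by fun_prop) _ _)
    (Continuous.intervalIntegrable (by fun_prop) _ _)]
  simp

/-- The integral of `g` over the circle of centre `x` and radius `t`, with respect to the angle. -/
noncomputable def angularIntegral (g : E2 → ℝ) (x : E2) (t : ℝ) : ℝ :=
  ∫ θ in -π..π, g (x + t • unitVec θ)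

lemma angularIntegral_zero_radius (g : E2 → ℝ) (x : E2) : angularIntegral g x 0 = 2 * π * g x := by
  simp [angularIntegral, two_mul]

lemma continuous_angularIntegral {g : E2 → ℝ} (hg : Continuous g) (x : E2) :
    Continuous (angularIntegral g x) :=
  intervalIntegral.continuous_parametric_intervalIntegral_of_continuous'
    (f := fun t θ => g (x + t • unitVec θ)) (by fun_prop) _ _

lemma angularIntegral_norm_sub_sq (c x : E2) (t : ℝ) :
    angularIntegral (fun y => ‖y - c‖ ^ 2) x t = 2 * π * (‖x - c‖ ^ 2 + t ^ 2) := by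
  have expand (θ : ℝ) : ‖x + t • unitVec θ - c‖ ^ 2 =
      (‖x - c‖ ^ 2 + t ^ 2) + 2 * t * inner ℝ (x - c) (unitVec θ) := by
    rw [add_sub_right_comm, norm_add_sq_real, inner_smul_right, norm_smul, norm_unitVec, mul_one,
      norm_eq_abs, sq_abs]
    ring
  simp only [angularIntegral, expand]
  rw [intervalIntegral.integral_add (by simp) (Continuous.intervalIntegrable (by fun_prop) _ _),
    intervalIntegral.integral_const_mul, integral_inner_unitVec, intervalIntegral.integral_const,
    smul_eq_mul]
  ring

lemma hasDerivAt_intervalIntegral_of_continuous {E : Type*} [NormedAddCommGroup E]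
    [NormedSpace ℝ E] {F F' : ℝ → ℝ → E} (hF : Continuous (Function.uncurry F))
    (hF' : Continuous (Function.uncurry F'))
    (h : ∀ t θ, HasDerivAt (fun t => F t θ) (F' t θ) t) (a b t : ℝ) :
    HasDerivAt (fun t => ∫ θ in a..b, F t θ) (∫ θ in a..b, F' t θ) t := by
  obtain ⟨C, hC⟩ := ((isCompact_Icc (a := t - 1) (b := t + 1)).prod
    (isCompact_uIcc (a := a) (b := b))).exists_bound_of_continuousOn hF'.continuousOn
  refine (intervalIntegral.hasDerivAt_integral_of_dominated_loc_of_deriv_le (bound := fun _ => C)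
    (Icc_mem_nhds (sub_one_lt t) (lt_add_one t))
    (Eventually.of_forall fun t => hF.uncurry_left t |>.aestronglyMeasurable)
    (hF.uncurry_left t |>.intervalIntegrable _ _) (hF'.uncurry_left t).aestronglyMeasurable
    (Eventually.of_forall fun θ hθ s hs => hC (s, θ) ⟨hs, uIoc_subset_uIcc hθ⟩)
    (by simp) (Eventually.of_forall fun θ _ s _ => h s θ)).2

lemma hasDerivAt_add_smul_unitVec_radius (x : E2) (t θ : ℝ) :
    HasDerivAt (fun t : ℝ => x + t • unitVec θ) (unitVec θ) t := by
  simpa using ((hasDerivAt_id t).smul_const (unitVec θ)).const_add x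

lemma hasDerivAt_add_smul_unitVec_angle (x : E2) (t θ : ℝ) :
    HasDerivAt (fun θ : ℝ => x + t • unitVec θ) (t • unitTangent θ) θ :=
  ((hasDerivAt_unitVec θ).fun_const_smul t).const_add x

lemma hasDerivAt_angularIntegral {W : E2 → ℝ} (hW : ContDiff ℝ 1 W) (x : E2) (t : ℝ) :
    HasDerivAt (angularIntegral W x)
      (∫ θ in -π..π, fderiv ℝ W (x + t • unitVec θ) (unitVec θ)) t := by
  have := hW.continuous_fderiv one_ne_zero
  refine hasDerivAt_intervalIntegral_of_continuous (F := fun t θ => W (x + t • unitVec θ))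
    (F' := fun t θ => fderiv ℝ W (x + t • unitVec θ) (unitVec θ)) ?_ ?_ (fun t θ => ?_) _ _ t
  · have := hW.continuous
    fun_prop
  · unfold Function.uncurry
    fun_prop
  · exact (hW.differentiable one_ne_zero _).hasFDerivAt.comp_hasDerivAt t
      (hasDerivAt_add_smul_unitVec_radius x t θ)

/-- The divergence of a planar vector field, the field being given by its dual `1`-form. -/
noncomputable def divergence (X : E2 → E2 →L[ℝ] ℝ) (y : E2) : ℝ :=
  fderiv ℝ X y (EuclideanSpace.single 0 1) (EuclideanSpace.single 0 1) +
    fderiv ℝ X y (EuclideanSpace.single 1 1) (EuclideanSpace.single 1 1)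

lemma continuous_divergence {X : E2 → E2 →L[ℝ] ℝ} (hX : ContDiff ℝ 1 X) :
    Continuous (divergence X) := by
  have := hX.continuous_fderiv one_ne_zero
  unfold divergence
  fun_prop

lemma divergence_eq_unitVec_add_unitTangent (X : E2 → E2 →L[ℝ] ℝ) (y : E2) (θ : ℝ) :
    divergence X y = fderiv ℝ X y (unitVec θ) (unitVec θ) +
      fderiv ℝ X y (unitTangent θ) (unitTangent θ) := by
  simp only [divergence, unitVec, unitTangent, map_add, map_smul, add_apply, smul_apply,
    smul_eq_mul]
  linear_combination (-(fderiv ℝ X y (EuclideanSpace.single 0 1) (EuclideanSpace.single 0 1)) -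
    fderiv ℝ X y (EuclideanSpace.single 1 1) (EuclideanSpace.single 1 1)) * cos_sq_add_sin_sq θ

lemma integral_angular_derivative {X : E2 → E2 →L[ℝ] ℝ} (hX : ContDiff ℝ 1 X) (x : E2) (t : ℝ) :
    ∫ θ in -π..π, (t * fderiv ℝ X (x + t • unitVec θ) (unitTangent θ) (unitTangent θ) -
      X (x + t • unitVec θ) (unitVec θ)) = 0 := by
  have := hX.continuous_fderiv one_ne_zero
  have hX₀ := hX.continuous
  have hderiv (θ : ℝ) : HasDerivAt (fun θ => X (x + t • unitVec θ) (unitTangent θ))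
      (t * fderiv ℝ X (x + t • unitVec θ) (unitTangent θ) (unitTangent θ) -
        X (x + t • unitVec θ) (unitVec θ)) θ := by
    refine (((hX.differentiable one_ne_zero _).hasFDerivAt.comp_hasDerivAt θ
      (hasDerivAt_add_smul_unitVec_angle x t θ)).clm_apply
        (hasDerivAt_unitTangent θ)).congr_deriv ?_
    simp [sub_eq_add_neg]
  rw [intervalIntegral.integral_eq_sub_of_hasDerivAt (fun θ _ => hderiv θ)
    (Continuous.intervalIntegrable (by fun_prop) _ _)]
  simp [unitVec, unitTangent]

lemma hasDerivAt_flux {X : E2 → E2 →L[ℝ] ℝ} (hX : ContDiff ℝ 1 X) (x : E2) (t : ℝ) :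
    HasDerivAt (fun t => t * ∫ θ in -π..π, X (x + t • unitVec θ) (unitVec θ))
      (t * angularIntegral (divergence X) x t) t := by
  have := hX.continuous_fderiv one_ne_zero
  have hX₀ := hX.continuous
  have hdiv := continuous_divergence hX
  have key := hasDerivAt_intervalIntegral_of_continuous
    (F := fun t θ => t * X (x + t • unitVec θ) (unitVec θ))
    (F' := fun t θ => X (x + t • unitVec θ) (unitVec θ) +
      t * fderiv ℝ X (x + t • unitVec θ) (unitVec θ) (unitVec θ))
    (by unfold Function.uncurry; fun_prop) (by unfold Function.uncurry; fun_prop)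
    (fun t θ => by
      refine ((hasDerivAt_id t).mul (((hX.differentiable one_ne_zero _).hasFDerivAt
        |>.comp_hasDerivAt t (hasDerivAt_add_smul_unitVec_radius x t θ)).clm_apply
          (hasDerivAt_const t (unitVec θ)))).congr_deriv ?_
      simp) (-π) π t
  simp only [intervalIntegral.integral_const_mul] at key
  refine key.congr_deriv ?_
  have split (θ : ℝ) : X (x + t • unitVec θ) (unitVec θ) +
      t * fderiv ℝ X (x + t • unitVec θ) (unitVec θ) (unitVec θ) =
      t * divergence X (x + t • unitVec θ) -
        (t * fderiv ℝ X (x + t • unitVec θ) (unitTangent θ) (unitTangent θ) -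
          X (x + t • unitVec θ) (unitVec θ)) := by
    rw [divergence_eq_unitVec_add_unitTangent X _ θ]
    ring
  simp only [split]
  rw [intervalIntegral.integral_sub (Continuous.intervalIntegrable (by fun_prop) _ _)
    (Continuous.intervalIntegrable (by fun_prop) _ _), integral_angular_derivative hX, sub_zero,
    intervalIntegral.integral_const_mul, angularIntegral]

lemma fderiv_pd {W : E2 → ℝ} {y : E2} (hW : DifferentiableAt ℝ (fderiv ℝ W) y) (j : Fin 2)
    (v : E2) :
    fderiv ℝ (pd j W) y v = fderiv ℝ (fderiv ℝ W) y v (EuclideanSpace.single j 1) := by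
  unfold pd
  simp [fderiv_clm_apply hW (differentiableAt_const _)]

lemma lapl_eq_divergence_fderiv {W : E2 → ℝ} (hW : ContDiff ℝ 2 W) :
    lapl W = divergence (fderiv ℝ W) := by
  ext y
  have hW' := ((hW.fderiv_right (m := 1) le_rfl).differentiable one_ne_zero) y
  rw [lapl, pd, pd, fderiv_pd hW', fderiv_pd hW', divergence]

lemma continuous_lapl {W : E2 → ℝ} (hW : ContDiff ℝ 2 W) : Continuous (lapl W) :=
  lapl_eq_divergence_fderiv hW ▸ continuous_divergence (hW.fderiv_right le_rfl)

lemma angularIntegral_sub_eq_intervalIntegral {W : E2 → ℝ} (hW : ContDiff ℝ 2 W) (x : E2) {ρ : ℝ}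
    (hρ : 0 < ρ) :
    angularIntegral W x ρ - 2 * π * W x =
      ∫ t in 0..ρ, (log ρ - log t) * (t * angularIntegral (lapl W) x t) := by
  have hW' : ContDiff ℝ 1 (fderiv ℝ W) := hW.fderiv_right le_rfl
  set D : ℝ → ℝ := fun t => ∫ θ in -π..π, fderiv ℝ W (x + t • unitVec θ) (unitVec θ)
  have hderiv (t : ℝ) (ht : t ∈ Ioo 0 ρ) :
      HasDerivAt (fun t => (log ρ - log t) * (t * D t) + angularIntegral W x t)
        ((log ρ - log t) * (t * angularIntegral (lapl W) x t)) t := by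
    have ht₀ : t ≠ 0 := ht.1.ne'
    have hflux := lapl_eq_divergence_fderiv hW ▸ hasDerivAt_flux hW' x t
    refine ((((hasDerivAt_log ht₀).const_sub _).mul hflux).add
      (hasDerivAt_angularIntegral (hW.of_le one_le_two) x t)).congr_deriv ?_
    field_simp
    ring
  have hcontD : Continuous D := by
    have := hW'.continuous
    exact intervalIntegral.continuous_parametric_intervalIntegral_of_continuous'
      (by unfold Function.uncurry; fun_prop) _ _
  have hcontW := continuous_angularIntegral hW.continuous x
  have hcontL := continuous_angularIntegral (continuous_lapl hW) x
  -- `t log t` extends continuously to `0`, `log t` does not.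
  have regroup (f : ℝ → ℝ) : (fun t => (log ρ - log t) * (t * f t)) =
      fun t => log ρ * t * f t - t * log t * f t := by
    ext t
    ring
  have hcont (f : ℝ → ℝ) (hf : Continuous f) :
      Continuous fun t => (log ρ - log t) * (t * f t) := by
    have := continuous_mul_log
    rw [regroup]
    fun_prop
  rw [intervalIntegral.integral_eq_sub_of_hasDerivAt_of_le hρ.le
    ((hcont D hcontD).add hcontW).continuousOn hderiv
    ((hcont _ hcontL).intervalIntegrable _ _)]
  simp [angularIntegral_zero_radius]

/-- The identification of `ℂ` with the Euclidean plane. -/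
noncomputable def complexIsometry : ℂ ≃ₗᵢ[ℝ] E2 := Complex.orthonormalBasisOneI.repr

lemma complexIsometry_circleMap (z : ℂ) (ρ θ : ℝ) :
    complexIsometry (circleMap z ρ θ) = complexIsometry z + ρ • unitVec θ := by
  rw [circleMap, map_add, ← Complex.real_smul, map_smul]
  congr 2
  ext i
  fin_cases i <;>
    simp [complexIsometry, unitVec, Complex.exp_ofReal_mul_I_re, Complex.exp_ofReal_mul_I_im]

lemma exists_measurePreserving_polarCoord : ∃ e : ℝ × ℝ ≃ᵐ E2, MeasurePreserving e ∧
    ∀ p, e (polarCoord.symm p) = p.1 • unitVec p.2 := by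
  refine ⟨Complex.measurableEquivRealProd.symm.trans complexIsometry.toMeasurableEquiv,
    Complex.volume_preserving_equiv_real_prod.symm.trans complexIsometry.measurePreserving,
    fun p => ?_⟩
  have h := complexIsometry_circleMap 0 p.1 p.2
  rw [circleMap_zero, map_zero, zero_add] at h
  rw [← h, Complex.exp_mul_I, ← Complex.ofReal_cos, ← Complex.ofReal_sin,
    ← Complex.polarCoord_symm_apply]
  rfl

lemma integral_polarCoord_target (g : E2 → ℝ) :
    ∫ p in polarCoord.target, p.1 * g (p.1 • unitVec p.2) = ∫ y, g y := by
  obtain ⟨e, he, hsymm⟩ := exists_measurePreserving_polarCoord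
  simp only [← he.integral_comp e.measurableEmbedding, ← hsymm, ← smul_eq_mul]
  exact integral_comp_polarCoord_symm (g ∘ e)

lemma integrableOn_polarCoord_target {g : E2 → ℝ} (hg : Integrable g) :
    IntegrableOn (fun p => p.1 * g (p.1 • unitVec p.2)) polarCoord.target := by
  obtain ⟨e, he, hsymm⟩ := exists_measurePreserving_polarCoord
  have hge : IntegrableOn (g ∘ e) (polarCoord.symm '' polarCoord.target) :=
    ((he.integrable_comp_emb e.measurableEmbedding).2 hg).integrableOn
  rw [integrableOn_image_iff_integrableOn_abs_det_fderiv_smul volume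
    polarCoord.open_target.measurableSet
    (fun p _ => (hasFDerivAt_polarCoord_symm p).hasFDerivWithinAt) polarCoord.symm.injOn] at hge
  refine hge.congr_fun (fun p hp => ?_) polarCoord.open_target.measurableSet
  simp only [det_fderivPolarCoordSymm, abs_of_pos (mem_Ioi.1 hp.1), Function.comp_apply, hsymm,
    smul_eq_mul]

lemma integrableOn_polarRectangle_and_integral {g : E2 → ℝ} {x : E2} {ρ : ℝ}
    (hg : IntegrableOn g (ball x ρ)) :
    IntegrableOn (fun p : ℝ × ℝ => p.1 * g (x + p.1 • unitVec p.2)) (Ioo 0 ρ ×ˢ Ioo (-π) π) ∧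
      ∫ y in ball x ρ, g y =
        ∫ p in Ioo 0 ρ ×ˢ Ioo (-π) π, p.1 * g (x + p.1 • unitVec p.2) := by
  set h : E2 → ℝ := fun y => (ball x ρ).indicator g (x + y) with hh
  have hmeas : MeasurableSet (Ioo 0 ρ ×ˢ Ioo (-π) π) := measurableSet_Ioo.prod measurableSet_Ioo
  have hsub : Ioo 0 ρ ×ˢ Ioo (-π) π ⊆ polarCoord.target := prod_mono Ioo_subset_Ioi_self subset_rfl
  have hpolar : EqOn (fun p => p.1 * h (p.1 • unitVec p.2)) ((Ioo 0 ρ ×ˢ Ioo (-π) π).indicator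
      fun p => p.1 * g (x + p.1 • unitVec p.2)) polarCoord.target := by
    intro p hp
    have hp₀ : 0 < p.1 := hp.1
    have hmem : p ∈ Ioo 0 ρ ×ˢ Ioo (-π) π ↔ p.1 < ρ :=
      ⟨fun h => h.1.2, fun h => ⟨⟨hp₀, h⟩, hp.2⟩⟩
    simp only [hh, indicator, mem_ball, dist_self_add_left, norm_smul_unitVec hp₀.le, hmem]
    split_ifs <;> simp
  have hint := integrableOn_polarCoord_target
    (((integrable_indicator_iff measurableSet_ball).2 hg).comp_add_left x)
  rw [integrableOn_congr_fun hpolar polarCoord.open_target.measurableSet] at hint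
  refine ⟨?_, ?_⟩
  · rwa [integrableOn_indicator_iff hmeas, inter_eq_left.2 hsub] at hint
  · rw [← integral_indicator measurableSet_ball, ← integral_add_left_eq_self _ x,
      ← integral_polarCoord_target,
      setIntegral_congr_fun polarCoord.open_target.measurableSet hpolar,
      setIntegral_indicator hmeas, inter_eq_right.2 hsub]

lemma setIntegral_Ioo_mul_eq_mul_angularIntegral (g : E2 → ℝ) (x : E2) (t : ℝ) :
    ∫ θ in Ioo (-π) π, t * g (x + t • unitVec θ) = t * angularIntegral g x t := by
  rw [angularIntegral, integral_const_mul,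
    intervalIntegral.integral_of_le (neg_le_self pi_pos.le), integral_Ioc_eq_integral_Ioo]

lemma setIntegral_ball_eq_intervalIntegral {g : E2 → ℝ} {x : E2} {ρ : ℝ} (hρ : 0 ≤ ρ)
    (hg : IntegrableOn g (ball x ρ)) :
    ∫ y in ball x ρ, g y = ∫ t in 0..ρ, t * angularIntegral g x t := by
  obtain ⟨hpolar, heq⟩ := integrableOn_polarRectangle_and_integral hg
  rw [Measure.volume_eq_prod] at hpolar heq
  rw [heq, setIntegral_prod _ hpolar, intervalIntegral.integral_of_le hρ,
    integral_Ioc_eq_integral_Ioo]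
  simp only [setIntegral_Ioo_mul_eq_mul_angularIntegral]

lemma integrableOn_ball_of_continuous {E F : Type*} [MetricSpace E] [ProperSpace E]
    [MeasurableSpace E] [OpensMeasurableSpace E] {μ : Measure E} [IsFiniteMeasureOnCompacts μ]
    [NormedAddCommGroup F] {f : E → F} (hf : Continuous f) (x : E) (ρ : ℝ) :
    IntegrableOn f (ball x ρ) μ :=
  (hf.continuousOn.integrableOn_compact (isCompact_closedBall x ρ)).mono_set
    ball_subset_closedBall

lemma setIntegral_ball_divergence {X : E2 → E2 →L[ℝ] ℝ} (hX : ContDiff ℝ 1 X) (x : E2) {ρ : ℝ}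
    (hρ : 0 ≤ ρ) :
    ∫ y in ball x ρ, divergence X y = ρ * ∫ θ in -π..π, X (x + ρ • unitVec θ) (unitVec θ) := by
  have hdiv := continuous_divergence hX
  rw [setIntegral_ball_eq_intervalIntegral hρ (integrableOn_ball_of_continuous hdiv x ρ),
    intervalIntegral.integral_eq_sub_of_hasDerivAt (fun t _ => hasDerivAt_flux hX x t)
      ((continuous_id.mul (continuous_angularIntegral hdiv x)).intervalIntegrable _ _)]
  simp

lemma periodic_unitVec : Function.Periodic unitVec (2 * π) := fun θ => by simp [unitVec]

lemma intervalIntegrable_unitVec_of_circleIntegrable {g : E2 → ℝ} {x : E2} {t : ℝ}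
    (hg : CircleIntegrable (g ∘ complexIsometry) (complexIsometry.symm x) t) :
    IntervalIntegrable (fun θ => g (x + t • unitVec θ)) volume (-π) π := by
  simp only [CircleIntegrable, Function.comp_apply, complexIsometry_circleMap,
    LinearIsometryEquiv.apply_symm_apply] at hg
  exact (periodic_unitVec.comp fun v => g (x + t • v)).intervalIntegrable₀ (by positivity) hg _ _

lemma angularIntegral_eq_circleAverage (g : E2 → ℝ) (x : E2) (t : ℝ) :
    angularIntegral g x t =
      2 * π * circleAverage (g ∘ complexIsometry) (complexIsometry.symm x) t := by
  simp only [circleAverage, Function.comp_apply, complexIsometry_circleMap,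
    LinearIsometryEquiv.apply_symm_apply, smul_eq_mul]
  have h := (periodic_unitVec.comp fun v => g (x + t • v)).intervalIntegral_add_eq (-π) 0
  rw [zero_add, neg_add_eq_sub, two_mul, add_sub_cancel_right, ← two_mul] at h
  simp only [Function.comp_apply] at h
  rw [angularIntegral, h, mul_inv_cancel_left₀ (by positivity)]

lemma log_norm_sub_comp_complexIsometry (y : E2) :
    (fun z => log ‖z - y‖) ∘ complexIsometry = fun z => log ‖z - complexIsometry.symm y‖ := by
  ext z
  rw [Function.comp_apply, ← complexIsometry.norm_map (z - _), map_sub,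
    LinearIsometryEquiv.apply_symm_apply]

lemma intervalIntegrable_log_norm_sub (x y : E2) (ρ : ℝ) :
    IntervalIntegrable (fun θ => log ‖x + ρ • unitVec θ - y‖) volume (-π) π :=
  intervalIntegrable_unitVec_of_circleIntegrable (g := fun z => log ‖z - y‖)
    (log_norm_sub_comp_complexIsometry y ▸ circleIntegrable_log_norm_sub_const ρ)

lemma angularIntegral_log_norm_sub (x y : E2) {ρ : ℝ} (hρ : 0 < ρ) :
    angularIntegral (fun z => log ‖z - y‖) x ρ = 2 * π * log (max ρ ‖x - y‖) := by
  have hmax : log (max ρ ‖x - y‖) = log ρ + posLog (ρ⁻¹ * ‖x - y‖) := by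
    rw [posLog_eq_log_max_one (by positivity), ← log_mul hρ.ne' (by positivity),
      mul_max_of_nonneg _ _ hρ.le, mul_one, mul_inv_cancel_left₀ hρ.ne']
  rw [angularIntegral_eq_circleAverage, log_norm_sub_comp_complexIsometry,
    circleAverage_log_norm_sub_const_eq_log_radius_add_posLog hρ.ne', ← map_sub,
    LinearIsometryEquiv.norm_map, hmax]

/-! ### Potentials of locally integrable kernels -/

section Potential

variable {E : Type*} [NormedAddCommGroup E] [NormedSpace ℝ E] [FiniteDimensional ℝ E]
  [MeasurableSpace E] [BorelSpace E] {μ : Measure E} [μ.IsAddHaarMeasure] {κ f : E → ℝ}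

lemma locallyIntegrable_log_norm (hE : 2 ≤ Module.finrank ℝ E) :
    LocallyIntegrable (fun z : E => log ‖z‖) μ := by
  have hinv : LocallyIntegrable (fun z : E => ‖z‖⁻¹) μ :=
    locallyIntegrable_of_norm_le_rpow (C := 1) (α := 1) (one_le_two.trans hE)
      (by exact_mod_cast hE) (Eventually.of_forall fun z => by simp [rpow_neg_one])
      (by fun_prop : Measurable _).aestronglyMeasurable
  refine (hinv.add continuous_norm.locallyIntegrable).mono
    (by fun_prop : Measurable _).aestronglyMeasurable (Eventually.of_forall fun z => ?_)
  rw [Pi.add_apply, norm_of_nonneg (r := ‖z‖⁻¹ + ‖z‖) (by positivity), norm_eq_abs, abs_le']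
  have hlog := log_le_self (norm_nonneg z)
  have hlog_inv := log_le_self (inv_nonneg.2 (norm_nonneg z))
  rw [log_inv] at hlog_inv
  constructor <;> linarith [norm_nonneg z, inv_nonneg.2 (norm_nonneg z)]

lemma integrableOn_ball_comp_sub (hκ : LocallyIntegrable κ μ)
    (x c : E) (R : ℝ) : IntegrableOn (fun y => κ (x - y)) (ball c R) μ := by
  have hball : (fun y => x - y) ⁻¹' ball (x - c) R = ball c R := by
    ext y
    rw [mem_preimage, mem_ball_iff_norm', mem_ball_iff_norm, sub_sub_sub_cancel_left]
  exact hball ▸ (((μ.measurePreserving_sub_left x).integrableOn_comp_preimage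
    (MeasurableEquiv.subLeft x).measurableEmbedding).2
    ((hκ.integrableOn_isCompact (isCompact_closedBall _ R)).mono_set ball_subset_closedBall))

lemma integrableOn_ball_comp_sub_mul (hκ : LocallyIntegrable κ μ) (hf : Continuous f)
    (x c : E) (R : ℝ) : IntegrableOn (fun y => κ (x - y) * f y) (ball c R) μ :=
  (integrableOn_ball_comp_sub hκ x c R).mul_continuousOn_of_subset hf.continuousOn
    measurableSet_ball (isCompact_closedBall c R) ball_subset_closedBall

lemma setIntegral_ball_comp_sub_mul_eq (κ f : E → ℝ) (x : E) (R : ℝ) :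
    ∫ y in ball 0 R, κ (x - y) * f y ∂μ = ∫ z, κ z * (ball 0 R).indicator f (x - z) ∂μ := by
  rw [← integral_indicator measurableSet_ball, ← integral_sub_left_eq_self _ μ x]
  refine integral_congr_ae (Eventually.of_forall fun z => ?_)
  simp only [indicator_mul_right, sub_sub_cancel]

lemma continuous_setIntegral_ball_comp_sub_mul (hκ : LocallyIntegrable κ μ) (hf : Continuous f)
    {R : ℝ} (hR : 0 < R) : Continuous fun x => ∫ y in ball 0 R, κ (x - y) * f y ∂μ := by
  obtain ⟨B, hB⟩ := (isCompact_closedBall (0 : E) R).exists_bound_of_continuousOn hf.continuousOn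
  set F : E → ℝ := (ball 0 R).indicator f
  have hF_meas : Measurable F := hf.measurable.indicator measurableSet_ball
  have hF_le (y : E) : ‖F y‖ ≤ |B| := by
    refine (norm_indicator_le_of_subset (ball_subset_closedBall (ε := R)) f y).trans ?_
    by_cases hy : y ∈ closedBall 0 R
    · rw [indicator_of_mem hy]
      exact (hB y hy).trans (le_abs_self B)
    · simp [hy]
  simp only [setIntegral_ball_comp_sub_mul_eq, continuous_iff_continuousAt]
  intro x₀
  refine continuousAt_of_dominated (bound := (ball 0 (‖x₀‖ + 1 + R)).indicator fun z => |κ z| * |B|)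
    (Eventually.of_forall fun x => hκ.aestronglyMeasurable.mul
      (hF_meas.comp (measurable_const.sub measurable_id)).aestronglyMeasurable) ?_ ?_ ?_
  · filter_upwards [ball_mem_nhds x₀ one_pos] with x hx
    refine Eventually.of_forall fun z => ?_
    by_cases hz : z ∈ ball 0 (‖x₀‖ + 1 + R)
    · rw [indicator_of_mem hz, norm_mul, norm_eq_abs (κ z)]
      exact mul_le_mul_of_nonneg_left (hF_le _) (abs_nonneg _)
    · have hxz : x - z ∉ ball 0 R := fun h => hz <| by
        rw [mem_ball_zero_iff] at h ⊢
        rw [mem_ball, dist_eq_norm] at hx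
        calc ‖z‖ = ‖x₀ + (x - x₀) - (x - z)‖ := by congr 1; abel
          _ ≤ ‖x₀‖ + ‖x - x₀‖ + ‖x - z‖ := norm_sub_le_of_le (norm_add_le _ _) le_rfl
          _ < ‖x₀‖ + 1 + R := by linarith
      simp [hz, hxz]
  · exact (integrable_indicator_iff measurableSet_ball).2
      (((hκ.integrableOn_isCompact (isCompact_closedBall 0 _)).mono_set
        ball_subset_closedBall).norm.mul_const _)
  · have hsphere : ∀ᵐ z ∂μ, x₀ - z ∉ sphere (0 : E) R :=
      (quasiMeasurePreserving_sub_left μ x₀).ae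
        (measure_eq_zero_iff_ae_notMem.1 (Measure.addHaar_sphere_of_ne_zero μ 0 hR.ne'))
    filter_upwards [hsphere] with z hz
    have hF : ContinuousAt F (x₀ - z) := hf.continuousOn.continuousAt_indicator
      fun h => hz (frontier_ball_subset_sphere h)
    exact continuousAt_const.mul
      (ContinuousAt.comp (f := fun x => x - z) hF (by fun_prop))

end Potential

/-! ### The logarithmic potential of a disc -/

/-- The logarithmic kernel `log (k / ‖z‖)`, except that its value at `z = 0` is `log k`. -/
noncomputable def logKernel (k : ℝ) (z : E2) : ℝ := log k - log ‖z‖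

@[fun_prop]
lemma measurable_logKernel (k : ℝ) : Measurable (logKernel k) := by
  unfold logKernel
  fun_prop

lemma locallyIntegrable_logKernel (k : ℝ) : LocallyIntegrable (logKernel k) :=
  continuous_const.locallyIntegrable.sub (locallyIntegrable_log_norm (by simp))

lemma logKernel_nonneg {k : ℝ} {z : E2} (hz : z ≠ 0) (hzk : ‖z‖ ≤ k) : 0 ≤ logKernel k z :=
  sub_nonneg.2 (log_le_log (norm_pos_iff.2 hz) hzk)

lemma angularIntegral_eq_add_setIntegral_logKernel {W : E2 → ℝ} (hW : ContDiff ℝ 2 W) (x : E2)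
    {ρ : ℝ} (hρ : 0 < ρ) :
    angularIntegral W x ρ = 2 * π * W x + ∫ y in ball x ρ, logKernel ρ (x - y) * lapl W y := by
  have hcont := continuous_lapl hW
  rw [setIntegral_ball_eq_intervalIntegral hρ.le
      (integrableOn_ball_comp_sub_mul (locallyIntegrable_logKernel ρ) hcont x x ρ),
    ← sub_eq_iff_eq_add', angularIntegral_sub_eq_intervalIntegral hW x hρ]
  refine intervalIntegral.integral_congr fun t ht => ?_
  rw [uIcc_of_le hρ.le] at ht
  simp only [angularIntegral, logKernel, sub_add_cancel_left, norm_neg, norm_smul_unitVec ht.1,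
    intervalIntegral.integral_const_mul]
  ring

lemma angularIntegral_logKernel_sub (k : ℝ) (x y : E2) {ρ : ℝ} (hρ : 0 < ρ) :
    angularIntegral (fun z => logKernel k (z - y)) x ρ =
      2 * π * (logKernel k (x - y) - (ball x ρ).indicator (fun y => logKernel ρ (x - y)) y) := by
  classical
  have hlog := angularIntegral_log_norm_sub x y hρ
  unfold angularIntegral logKernel at *
  rw [intervalIntegral.integral_sub (by simp) (intervalIntegrable_log_norm_sub x y ρ), hlog,
    intervalIntegral.integral_const, smul_eq_mul, indicator_apply, mem_ball_iff_norm']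
  split_ifs with h
  · rw [max_eq_left h.le]
    ring
  · rw [max_eq_right (not_lt.1 h)]
    ring

/-- The logarithmic potential of the density `f` on the disc of radius `R` about the origin; the
constant in the kernel makes it nonnegative on that disc when `f` is. -/
noncomputable def logPotential (f : E2 → ℝ) (R : ℝ) (x : E2) : ℝ :=
  ∫ y in ball 0 R, logKernel (2 * R) (x - y) * f y

lemma continuous_logPotential {f : E2 → ℝ} (hf : Continuous f) {R : ℝ} (hR : 0 < R) :
    Continuous (logPotential f R) :=
  continuous_setIntegral_ball_comp_sub_mul (locallyIntegrable_logKernel _) hf hR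

lemma logPotential_nonneg {f : E2 → ℝ} {R : ℝ} (hf : ∀ y ∈ ball 0 R, 0 ≤ f y) {x : E2}
    (hx : x ∈ closedBall 0 R) : 0 ≤ logPotential f R x := by
  refine setIntegral_nonneg_of_ae_restrict ?_
  filter_upwards [ae_restrict_mem measurableSet_ball, ae_restrict_of_ae (volume.ae_ne x)]
    with y hy hyx
  refine mul_nonneg (logKernel_nonneg (sub_ne_zero.2 hyx.symm) ?_) (hf y hy)
  rw [mem_closedBall_zero_iff] at hx
  rw [mem_ball_zero_iff] at hy
  linarith [norm_sub_le x y]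

lemma integrable_prod_logKernel {f : E2 → ℝ} (hf : Continuous f) {R : ℝ} (hR : 0 < R) (k : ℝ)
    (x : E2) (ρ : ℝ) :
    Integrable (fun p : ℝ × E2 => logKernel k (x + ρ • unitVec p.1 - p.2) * f p.2)
      ((volume.restrict (Ioc (-π) π)).prod (volume.restrict (ball 0 R))) := by
  have hf_meas := hf.measurable
  have hmeas : Measurable fun p : ℝ × E2 => logKernel k (x + ρ • unitVec p.1 - p.2) * f p.2 := by
    fun_prop
  rw [integrable_prod_iff hmeas.aestronglyMeasurable]
  have hκ := locallyIntegrable_logKernel k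
  refine ⟨Eventually.of_forall fun θ =>
    integrableOn_ball_comp_sub_mul hκ hf (x + ρ • unitVec θ) 0 R, ?_⟩
  have hκ_abs : LocallyIntegrable fun z => ‖logKernel k z‖ := fun z => (hκ z).norm
  have hcont : Continuous fun θ : ℝ =>
      ∫ y in ball 0 R, ‖logKernel k (x + ρ • unitVec θ - y)‖ * ‖f y‖ :=
    (continuous_setIntegral_ball_comp_sub_mul hκ_abs hf.norm hR).comp
      (by fun_prop : Continuous fun θ : ℝ => x + ρ • unitVec θ)
  simp only [norm_mul]
  exact hcont.integrableOn_Ioc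

lemma angularIntegral_logPotential {f : E2 → ℝ} (hf : Continuous f) {R : ℝ} (hR : 0 < R) {x : E2}
    {ρ : ℝ} (hρ : 0 < ρ) (hsub : ball x ρ ⊆ ball 0 R) :
    angularIntegral (logPotential f R) x ρ =
      2 * π * (logPotential f R x - ∫ y in ball x ρ, logKernel ρ (x - y) * f y) := by
  have hpi : -π ≤ π := neg_le_self pi_pos.le
  have hcircle (y : E2) : ∫ θ in Ioc (-π) π, logKernel (2 * R) (x + ρ • unitVec θ - y) * f y =
      2 * π * (logKernel (2 * R) (x - y) * f y -
        (ball x ρ).indicator (fun y => logKernel ρ (x - y) * f y) y) := by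
    rw [integral_mul_const, ← intervalIntegral.integral_of_le hpi]
    have h := angularIntegral_logKernel_sub (2 * R) x y hρ
    rw [angularIntegral] at h
    rw [h, indicator_mul_left]
    ring
  rw [angularIntegral, intervalIntegral.integral_of_le hpi]
  simp only [logPotential]
  rw [integral_integral_swap (integrable_prod_logKernel hf hR _ x ρ)]
  simp only [hcircle]
  rw [integral_const_mul, integral_sub
      (integrableOn_ball_comp_sub_mul (locallyIntegrable_logKernel _) hf x 0 R)
      ((integrable_indicator_iff measurableSet_ball).2
        (integrableOn_ball_comp_sub_mul (locallyIntegrable_logKernel ρ) hf x x ρ)).integrableOn,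
    setIntegral_indicator measurableSet_ball, inter_eq_right.2 hsub]

/-! ### The maximum principle -/

lemma le_of_forall_lt_angularIntegral {q : E2 → ℝ} {c : E2} {R C : ℝ}
    (hq : ContinuousOn q (closedBall c R))
    (hmean : ∀ x ∈ ball c R, ∃ ρ > 0, closedBall x ρ ⊆ ball c R ∧
      2 * π * q x < angularIntegral q x ρ)
    (hC : ∀ x ∈ sphere c R, q x ≤ C) {x : E2} (hx : x ∈ closedBall c R) : q x ≤ C := by
  obtain ⟨z, hz, hmax⟩ := (isCompact_closedBall c R).exists_isMaxOn ⟨x, hx⟩ hq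
  rcases (mem_closedBall.1 hz).eq_or_lt with hz | hz
  · exact (hmax hx).trans (hC z hz)
  obtain ⟨ρ, hρ, hsub, hlt⟩ := hmean z hz
  have hmem (θ : ℝ) : z + ρ • unitVec θ ∈ closedBall c R :=
    ball_subset_closedBall (hsub (add_smul_unitVec_mem_closedBall z hρ.le θ))
  have hle : angularIntegral q z ρ ≤ ∫ _ in -π..π, q z :=
    intervalIntegral.integral_mono_on (neg_le_self pi_pos.le)
      ((hq.comp_continuous (by fun_prop) hmem).intervalIntegrable _ _)
      (by simp) fun θ _ => hmax (hmem θ)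
  rw [intervalIntegral.integral_const, smul_eq_mul, sub_neg_eq_add, ← two_mul] at hle
  exact absurd hlt hle.not_gt

lemma le_of_forall_le_angularIntegral {w : E2 → ℝ} {c : E2} {R C : ℝ}
    (hw : ContinuousOn w (closedBall c R))
    (hmean : ∀ x ∈ ball c R, ∃ ρ > 0, closedBall x ρ ⊆ ball c R ∧
      2 * π * w x ≤ angularIntegral w x ρ)
    (hC : ∀ x ∈ sphere c R, w x ≤ C) {x : E2} (hx : x ∈ closedBall c R) : w x ≤ C := by
  have hperturbed (ε : ℝ) (hε : 0 < ε) : w x + ε * ‖x - c‖ ^ 2 ≤ C + ε * R ^ 2 := by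
    refine le_of_forall_lt_angularIntegral (q := fun x => w x + ε * ‖x - c‖ ^ 2) (by fun_prop)
      (fun z hz => ?_) (fun z hz => ?_) hx
    · obtain ⟨ρ, hρ, hsub, hle⟩ := hmean z hz
      refine ⟨ρ, hρ, hsub, ?_⟩
      have hw_circle : Continuous fun θ => w (z + ρ • unitVec θ) :=
        hw.comp_continuous (by fun_prop) fun θ =>
          ball_subset_closedBall (hsub (add_smul_unitVec_mem_closedBall z hρ.le θ))
      have hsq := angularIntegral_norm_sub_sq c z ρ
      unfold angularIntegral at *
      rw [intervalIntegral.integral_add (hw_circle.intervalIntegrable _ _)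
        (Continuous.intervalIntegrable (by fun_prop) _ _), intervalIntegral.integral_const_mul,
        hsq]
      have : 0 < 2 * π * (ε * ρ ^ 2) := by positivity
      linarith
    · rw [mem_sphere_iff_norm.1 hz]
      gcongr
      exact hC z hz
  have hlim : Tendsto (fun ε : ℝ => C + ε * R ^ 2) (nhdsWithin 0 (Ioi 0)) (nhds C) := by
    have : Continuous fun ε : ℝ => C + ε * R ^ 2 := by fun_prop
    simpa using (this.tendsto 0).mono_left nhdsWithin_le_nhds
  refine ge_of_tendsto hlim (eventually_nhdsWithin_of_forall fun ε (hε : 0 < ε) => ?_)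
  exact (le_add_of_nonneg_right (by positivity)).trans (hperturbed ε hε)

lemma two_pi_mul_le_add_logPotential {U : E2 → ℝ} (hU : ContDiff ℝ 2 U) {R C : ℝ} (hR : 0 < R)
    (hf : ∀ y ∈ ball 0 R, 0 ≤ -lapl U y) (hC : ∀ x ∈ sphere 0 R, U x ≤ C) {x : E2}
    (hx : x ∈ closedBall 0 R) :
    2 * π * U x ≤ 2 * π * C + logPotential (fun y => -lapl U y) R x := by
  set f : E2 → ℝ := fun y => -lapl U y with hf_def
  have hf_cont : Continuous f := (continuous_lapl hU).neg
  have hN_cont := continuous_logPotential hf_cont hR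
  have hU_cont := hU.continuous
  rw [← sub_le_iff_le_add]
  refine le_of_forall_le_angularIntegral (w := fun x => 2 * π * U x - logPotential f R x)
    (by fun_prop) (fun z hz => ?_) (fun z hz => ?_) hx
  · obtain ⟨ρ, hρ, hsub⟩ := nhds_basis_closedBall.mem_iff.1 (isOpen_ball.mem_nhds hz)
    refine ⟨ρ, hρ, hsub, le_of_eq ?_⟩
    have hmeanU := angularIntegral_eq_add_setIntegral_logKernel hU z hρ
    have hmeanN := angularIntegral_logPotential hf_cont hR hρ (ball_subset_closedBall.trans hsub)
    unfold angularIntegral at *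
    rw [intervalIntegral.integral_sub (Continuous.intervalIntegrable (by fun_prop) _ _)
      (Continuous.intervalIntegrable (by fun_prop) _ _), intervalIntegral.integral_const_mul,
      hmeanU, hmeanN]
    simp only [hf_def, mul_neg, integral_neg]
    ring
  · have hle : 2 * π * U z ≤ 2 * π * C := by
      gcongr
      exact hC z hz
    linarith [logPotential_nonneg hf (sphere_subset_closedBall hz)]

/-! ### Kernels of power decay -/

lemma one_add_rpow_le {t p : ℝ} (ht : 0 ≤ t) (hp : 0 ≤ p) : (1 + t) ^ p ≤ 2 ^ p * (1 + t ^ p) := by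
  have hpow : 0 ≤ (2 : ℝ) ^ p := by positivity
  rcases le_total t 1 with h | h
  · calc (1 + t) ^ p ≤ 2 ^ p := rpow_le_rpow (by positivity) (by linarith) hp
      _ ≤ 2 ^ p * (1 + t ^ p) := le_mul_of_one_le_right hpow (by linarith [rpow_nonneg ht p])
  · calc (1 + t) ^ p ≤ (2 * t) ^ p := rpow_le_rpow (by positivity) (by linarith) hp
      _ = 2 ^ p * t ^ p := mul_rpow zero_le_two ht
      _ ≤ 2 ^ p * (1 + t ^ p) := by gcongr; linarith

lemma one_add_div_rpow_le {c z p : ℝ} (hc : 0 ≤ c) (hz : 0 ≤ z) (hp : 0 ≤ p) :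
    (1 + c / z) ^ p ≤ 2 ^ p * (1 + c ^ p * z ^ (-p)) := by
  refine (one_add_rpow_le (div_nonneg hc hz) hp).trans_eq ?_
  rw [div_rpow hc hz, rpow_neg hz, div_eq_mul_inv]

/-- The radial function equal to `ρ ^ (p - a) * ‖z‖ ^ (-p)` for `‖z‖ ≤ ρ` and to `‖z‖ ^ (-a)`
for `‖z‖ ≥ ρ`, where `ρ > 0`; in dimension strictly between `p` and `a` it is integrable. -/
noncomputable def powerProfile {E : Type*} [Norm E] (p a ρ : ℝ) (z : E) : ℝ :=
  ‖z‖ ^ (-p) * max ρ ‖z‖ ^ (p - a)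

/-- The kernel `‖x‖ ^ (-a) * (1 + ‖x‖ / ‖x - y‖) ^ p` controlling `exp U` away from the blow-up
point. On the diagonal the quotient is `0` by convention. -/
noncomputable def decayKernel {E : Type*} [NormedAddCommGroup E] (p a : ℝ) (x y : E) : ℝ :=
  ‖x‖ ^ (-a) * (1 + ‖x‖ / ‖x - y‖) ^ p

section DecayKernel

variable {E : Type*} [NormedAddCommGroup E] {p a ρ : ℝ}

lemma powerProfile_eq_rpow {z : E} (hρ : 0 < ρ) (hz : ρ ≤ ‖z‖) :
    powerProfile p a ρ z = ‖z‖ ^ (-a) := by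
  rw [powerProfile, max_eq_right hz, ← rpow_add (hρ.trans_le hz)]
  ring_nf

lemma powerProfile_nonneg (hρ : 0 ≤ ρ) (z : E) : 0 ≤ powerProfile p a ρ z :=
  mul_nonneg (rpow_nonneg (norm_nonneg z) _) (rpow_nonneg (le_max_of_le_left hρ) _)

lemma decayKernel_nonneg (x y : E) : 0 ≤ decayKernel p a x y := by
  unfold decayKernel; positivity

lemma decayKernel_le (hp : 0 ≤ p) (hpa : p ≤ a) (hρ : 0 < ρ) {x : E} (hx : ρ ≤ ‖x‖) (y : E) :
    decayKernel p a x y ≤ 2 ^ p * (powerProfile p a ρ x + powerProfile p a ρ (x - y)) := by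
  have hx0 : 0 < ‖x‖ := hρ.trans_le hx
  rw [decayKernel, powerProfile_eq_rpow hρ hx]
  rcases le_total ‖x‖ ‖x - y‖ with h | h
  · have hbase : 1 + ‖x‖ / ‖x - y‖ ≤ 2 := by linarith [div_le_one_of_le₀ h (norm_nonneg _)]
    calc ‖x‖ ^ (-a) * (1 + ‖x‖ / ‖x - y‖) ^ p ≤ ‖x‖ ^ (-a) * 2 ^ p := by gcongr
      _ = 2 ^ p * ‖x‖ ^ (-a) := mul_comm _ _
      _ ≤ 2 ^ p * (‖x‖ ^ (-a) + powerProfile p a ρ (x - y)) := by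
        gcongr; exact le_add_of_nonneg_right (powerProfile_nonneg hρ.le _)
  · have hmax : ‖x‖ ^ (p - a) ≤ max ρ ‖x - y‖ ^ (p - a) :=
      rpow_le_rpow_of_nonpos (by positivity) (max_le hx h) (by linarith)
    calc ‖x‖ ^ (-a) * (1 + ‖x‖ / ‖x - y‖) ^ p
        ≤ ‖x‖ ^ (-a) * (2 ^ p * (1 + ‖x‖ ^ p * ‖x - y‖ ^ (-p))) := by
          gcongr; exact one_add_div_rpow_le (norm_nonneg _) (norm_nonneg _) hp
      _ = 2 ^ p * (‖x‖ ^ (-a) + ‖x - y‖ ^ (-p) * ‖x‖ ^ (p - a)) := by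
          rw [show p - a = -a + p by ring, rpow_add hx0]; ring
      _ ≤ 2 ^ p * (‖x‖ ^ (-a) + powerProfile p a ρ (x - y)) := by
          unfold powerProfile; gcongr

lemma powerProfile_eq_smul [NormedSpace ℝ E] (hρ : 0 < ρ) (z : E) :
    powerProfile p a ρ z = ρ ^ (-a) * powerProfile p a 1 (ρ⁻¹ • z) := by
  have hnorm : ‖ρ⁻¹ • z‖ = ρ⁻¹ * ‖z‖ := norm_smul_of_nonneg (inv_nonneg.2 hρ.le) z
  have hmax : max 1 (ρ⁻¹ * ‖z‖) = ρ⁻¹ * max ρ ‖z‖ := by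
    rw [mul_max_of_nonneg _ _ (inv_nonneg.2 hρ.le), inv_mul_cancel₀ hρ.ne']
  have hpow : ρ ^ (-a) * (ρ⁻¹ ^ (-p) * ρ⁻¹ ^ (p - a)) = 1 := by
    rw [← rpow_add (inv_pos.2 hρ), inv_rpow hρ.le, ← rpow_neg hρ.le, ← rpow_add hρ]
    ring_nf
    exact rpow_zero ρ
  rw [powerProfile, powerProfile, hnorm, hmax, mul_rpow (inv_nonneg.2 hρ.le) (norm_nonneg z),
    mul_rpow (inv_nonneg.2 hρ.le) (le_max_of_le_left hρ.le), ← one_mul (_ * _), ← hpow]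
  ring

variable [MeasurableSpace E] {μ : Measure E}

variable (μ) in
/-- The constant in the uniform bound `setIntegral_decayKernel_le` for the mass of the decay
kernel. -/
noncomputable def decayConst (p a : ℝ) : ℝ := 2 ^ p * (2 * ∫ z : E, powerProfile p a 1 z ∂μ)

lemma decayConst_nonneg : 0 ≤ decayConst μ p a :=
  mul_nonneg (by positivity)
    (mul_nonneg zero_le_two (integral_nonneg (powerProfile_nonneg zero_le_one)))

variable [NormedSpace ℝ E] [FiniteDimensional ℝ E] [BorelSpace E] [μ.IsAddHaarMeasure]

lemma locallyIntegrable_norm_rpow_neg (hp : 0 ≤ p) (hpE : p < Module.finrank ℝ E) :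
    LocallyIntegrable (fun z : E => ‖z‖ ^ (-p)) μ :=
  locallyIntegrable_of_norm_le_rpow (C := 1) (by exact_mod_cast hp.trans_lt hpE) hpE
    (Eventually.of_forall fun z => by rw [one_mul, norm_of_nonneg (by positivity)])
    (by fun_prop : Measurable _).aestronglyMeasurable

lemma locallyIntegrable_one_add_div_norm_rpow (hp : 0 ≤ p) (hpE : p < Module.finrank ℝ E)
    {c : ℝ} (hc : 0 ≤ c) : LocallyIntegrable (fun z : E => (1 + c / ‖z‖) ^ p) μ := by
  have hdom : LocallyIntegrable (fun z : E => 2 ^ p * (1 + c ^ p * ‖z‖ ^ (-p))) μ :=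
    ((locallyIntegrable_const 1).add
      ((locallyIntegrable_norm_rpow_neg hp hpE).smul (c ^ p))).smul (2 ^ p : ℝ)
  refine hdom.mono (by fun_prop : Measurable _).aestronglyMeasurable
    (Eventually.of_forall fun z => ?_)
  rw [norm_of_nonneg (by positivity), norm_of_nonneg (by positivity)]
  exact one_add_div_rpow_le hc (norm_nonneg z) hp

lemma integrable_powerProfile_one (hp : 0 ≤ p) (hpE : p < Module.finrank ℝ E)
    (ha : Module.finrank ℝ E < a) : Integrable (fun z : E => powerProfile p a 1 z) μ := by
  have hnear : IntegrableOn (fun z : E => ‖z‖ ^ (-p)) (ball 0 1) μ :=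
    ((locallyIntegrable_norm_rpow_neg hp hpE).integrableOn_isCompact
      (isCompact_closedBall 0 1)).mono_set ball_subset_closedBall
  have hfar : Integrable (fun z : E => 2 ^ a * (1 + ‖z‖) ^ (-a)) μ :=
    (integrable_one_add_norm ha).const_mul _
  refine ((hnear.integrable_indicator measurableSet_ball).add hfar).mono'
    (by unfold powerProfile; fun_prop : Measurable _).aestronglyMeasurable
    (Eventually.of_forall fun z => ?_)
  rw [norm_of_nonneg (powerProfile_nonneg zero_le_one z)]
  rcases lt_or_ge ‖z‖ 1 with hz | hz
  · rw [Pi.add_apply, indicator_of_mem (mem_ball_zero_iff.2 hz), powerProfile, max_eq_left hz.le,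
      one_rpow, mul_one]
    exact le_add_of_nonneg_right (by positivity)
  · rw [Pi.add_apply, indicator_of_notMem (by simpa using hz), zero_add,
      powerProfile_eq_rpow one_pos hz, rpow_neg (by positivity), rpow_neg (by positivity),
      ← div_eq_mul_inv, inv_eq_one_div, div_le_div_iff₀ (by positivity) (by positivity), one_mul,
      ← mul_rpow zero_le_two (norm_nonneg z)]
    exact rpow_le_rpow (by positivity) (by linarith) ((Nat.cast_nonneg _).trans ha.le)

lemma integrable_powerProfile (hp : 0 ≤ p) (hpE : p < Module.finrank ℝ E)
    (ha : Module.finrank ℝ E < a) (hρ : 0 < ρ) :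
    Integrable (fun z : E => powerProfile p a ρ z) μ := by
  simp only [powerProfile_eq_smul hρ]
  exact ((integrable_powerProfile_one hp hpE ha).comp_smul (inv_ne_zero hρ.ne')).const_mul _

lemma integral_powerProfile (hρ : 0 < ρ) : ∫ z : E, powerProfile p a ρ z ∂μ =
    ρ ^ (Module.finrank ℝ E - a) * ∫ z : E, powerProfile p a 1 z ∂μ := by
  simp only [powerProfile_eq_smul hρ]
  rw [integral_const_mul, Measure.integral_comp_inv_smul μ (powerProfile p a 1),
    abs_of_nonneg (by positivity), smul_eq_mul, ← mul_assoc, sub_eq_neg_add, rpow_add hρ,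
    rpow_natCast]

lemma integrableOn_decayKernel (hp : 0 ≤ p) (hpE : p < Module.finrank ℝ E)
    (ha : Module.finrank ℝ E < a) (hρ : 0 < ρ) (y : E) :
    IntegrableOn (fun x => decayKernel p a x y) (ball 0 ρ)ᶜ μ := by
  have hprofile : Integrable (fun z : E => powerProfile p a ρ z) μ :=
    integrable_powerProfile hp hpE ha hρ
  refine ((hprofile.add (hprofile.comp_sub_right y)).const_mul (2 ^ p)).integrableOn.mono'
    (by unfold decayKernel; fun_prop : Measurable _).aestronglyMeasurable ?_
  filter_upwards [ae_restrict_mem measurableSet_ball.compl] with x hx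
  rw [norm_of_nonneg (decayKernel_nonneg x y)]
  exact decayKernel_le hp (hpE.trans ha).le hρ (by simpa using hx) y

lemma setIntegral_decayKernel_le (hp : 0 ≤ p) (hpE : p < Module.finrank ℝ E)
    (ha : Module.finrank ℝ E < a) (hρ : 0 < ρ) (y : E) :
    ∫ x in (ball 0 ρ)ᶜ, decayKernel p a x y ∂μ ≤
      decayConst μ p a * ρ ^ (Module.finrank ℝ E - a) := by
  have hprofile : Integrable (fun z : E => powerProfile p a ρ z) μ :=
    integrable_powerProfile hp hpE ha hρ
  have hsum := (hprofile.add (hprofile.comp_sub_right y)).const_mul (2 ^ p)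
  calc ∫ x in (ball 0 ρ)ᶜ, decayKernel p a x y ∂μ
      ≤ ∫ x in (ball 0 ρ)ᶜ, 2 ^ p * (powerProfile p a ρ x + powerProfile p a ρ (x - y)) ∂μ :=
        setIntegral_mono_on (integrableOn_decayKernel hp hpE ha hρ y) hsum.integrableOn
          measurableSet_ball.compl fun x hx =>
            decayKernel_le hp (hpE.trans ha).le hρ (by simpa using hx) y
    _ ≤ ∫ x, 2 ^ p * (powerProfile p a ρ x + powerProfile p a ρ (x - y)) ∂μ :=
        setIntegral_le_integral hsum (Eventually.of_forall fun x => mul_nonneg (by positivity)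
          (add_nonneg (powerProfile_nonneg hρ.le _) (powerProfile_nonneg hρ.le _)))
    _ = decayConst μ p a * ρ ^ (Module.finrank ℝ E - a) := by
        rw [integral_const_mul, integral_add hprofile (hprofile.comp_sub_right y),
          integral_sub_right_eq_self (fun z => powerProfile p a ρ z) y, integral_powerProfile hρ,
          decayConst]
        ring

end DecayKernel

section KernelBounds

variable {α β : Type*} [MeasurableSpace α] [MeasurableSpace β] {μ : Measure α} {ν : Measure β}
  [SFinite μ] [SFinite ν] {κ : α → β → ℝ} {w : β → ℝ} {B : ℝ}

lemma integrable_prod_mul_of_integral_le (hκm : Measurable (Function.uncurry κ))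
    (hκ0 : ∀ x y, 0 ≤ κ x y) (hκi : ∀ y, Integrable (fun x => κ x y) μ)
    (hκB : ∀ y, ∫ x, κ x y ∂μ ≤ B) (hw : Integrable w ν) :
    Integrable (Function.uncurry fun x y => κ x y * w y) (μ.prod ν) := by
  have hmeas : AEStronglyMeasurable (Function.uncurry fun x y => κ x y * w y) (μ.prod ν) :=
    hκm.aestronglyMeasurable.mul hw.aestronglyMeasurable.comp_snd
  refine (integrable_prod_iff' hmeas).2
    ⟨Eventually.of_forall fun y => (hκi y).mul_const (w y), ?_⟩
  refine (hw.norm.const_mul B).mono' hmeas.norm.prod_swap.integral_prod_right' ?_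
  filter_upwards with y
  have hinner : ∫ x, ‖Function.uncurry (fun x y => κ x y * w y) (x, y)‖ ∂μ =
      (∫ x, κ x y ∂μ) * ‖w y‖ := by
    simp only [Function.uncurry_apply_pair, norm_mul, norm_of_nonneg (hκ0 _ _), integral_mul_const]
  rw [hinner, norm_of_nonneg (mul_nonneg (integral_nonneg fun x => hκ0 x y) (norm_nonneg _))]
  exact mul_le_mul_of_nonneg_right (hκB y) (norm_nonneg _)

lemma integral_integral_mul_le (hκm : Measurable (Function.uncurry κ))
    (hκ0 : ∀ x y, 0 ≤ κ x y) (hκi : ∀ y, Integrable (fun x => κ x y) μ)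
    (hκB : ∀ y, ∫ x, κ x y ∂μ ≤ B) (hw : Integrable w ν) (hw0 : 0 ≤ᵐ[ν] w) :
    ∫ x, ∫ y, κ x y * w y ∂ν ∂μ ≤ B * ∫ y, w y ∂ν := by
  have hprod := integrable_prod_mul_of_integral_le hκm hκ0 hκi hκB hw
  rw [integral_integral_swap hprod, ← integral_const_mul]
  refine integral_mono_ae hprod.integral_prod_right (hw.const_mul B) ?_
  filter_upwards [hw0] with y hy
  rw [integral_mul_const]
  exact mul_le_mul_of_nonneg_right (hκB y) hy

end KernelBounds

section DecayPotential

variable {E : Type*} [NormedAddCommGroup E] [MeasurableSpace E] {μ ν : Measure E}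
  {p a ρ : ℝ} {w : E → ℝ}

variable (ν) in
/-- The decay kernel integrated against the unit mass at the origin plus the density `w`. -/
noncomputable def decayPotential (p a : ℝ) (w : E → ℝ) (x : E) : ℝ :=
  decayKernel p a x 0 + ∫ y, decayKernel p a x y * w y ∂ν

lemma decayPotential_nonneg (hw0 : 0 ≤ᵐ[ν] w) (x : E) : 0 ≤ decayPotential ν p a w x :=
  add_nonneg (decayKernel_nonneg x 0) <| integral_nonneg_of_ae <| by
    filter_upwards [hw0] with y hy using mul_nonneg (decayKernel_nonneg x y) hy

variable [NormedSpace ℝ E] [FiniteDimensional ℝ E] [BorelSpace E] [μ.IsAddHaarMeasure] [SFinite ν]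

lemma measurable_decayKernel : Measurable (Function.uncurry (decayKernel (E := E) p a)) := by
  unfold Function.uncurry decayKernel; fun_prop

lemma integrableOn_integral_decayKernel_mul (hp : 0 ≤ p) (hpE : p < Module.finrank ℝ E)
    (ha : Module.finrank ℝ E < a) (hρ : 0 < ρ) (hw : Integrable w ν) :
    IntegrableOn (fun x => ∫ y, decayKernel p a x y * w y ∂ν) (ball 0 ρ)ᶜ μ :=
  (integrable_prod_mul_of_integral_le measurable_decayKernel decayKernel_nonneg
    (integrableOn_decayKernel hp hpE ha hρ) (setIntegral_decayKernel_le hp hpE ha hρ)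
    hw).integral_prod_left

lemma integrableOn_decayPotential (hp : 0 ≤ p) (hpE : p < Module.finrank ℝ E)
    (ha : Module.finrank ℝ E < a) (hρ : 0 < ρ) (hw : Integrable w ν) :
    IntegrableOn (decayPotential ν p a w) (ball 0 ρ)ᶜ μ :=
  (integrableOn_decayKernel hp hpE ha hρ 0).add
    (integrableOn_integral_decayKernel_mul hp hpE ha hρ hw)

lemma setIntegral_decayPotential_le (hp : 0 ≤ p) (hpE : p < Module.finrank ℝ E)
    (ha : Module.finrank ℝ E < a) (hρ : 0 < ρ) (hw : Integrable w ν) (hw0 : 0 ≤ᵐ[ν] w) :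
    ∫ x in (ball 0 ρ)ᶜ, decayPotential ν p a w x ∂μ ≤
      decayConst μ p a * ρ ^ (Module.finrank ℝ E - a) * (1 + ∫ y, w y ∂ν) := by
  simp only [decayPotential]
  rw [integral_add (integrableOn_decayKernel hp hpE ha hρ 0)
    (integrableOn_integral_decayKernel_mul hp hpE ha hρ hw), mul_one_add]
  exact add_le_add (setIntegral_decayKernel_le hp hpE ha hρ 0)
    (integral_integral_mul_le measurable_decayKernel decayKernel_nonneg
      (integrableOn_decayKernel hp hpE ha hρ) (setIntegral_decayKernel_le hp hpE ha hρ) hw hw0)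

end DecayPotential

/-! ### Exponentials of potentials -/

section Jensen

variable {α : Type*} [MeasurableSpace α] {μ : Measure α} {F w : α → ℝ}

lemma exp_mul_le_integral_exp_mul (hw : Integrable w μ) (hw0 : 0 ≤ᵐ[μ] w)
    (hF : Integrable (fun x => F x * w x) μ) (hexp : Integrable (fun x => exp (F x) * w x) μ)
    (t : ℝ) : exp t * ((1 - t) * ∫ x, w x ∂μ + ∫ x, F x * w x ∂μ) ≤
      ∫ x, exp (F x) * w x ∂μ := by
  have hlin : Integrable (fun x => (1 - t) * w x + F x * w x) μ := (hw.const_mul _).add hF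
  rw [← integral_const_mul (1 - t), ← integral_add (hw.const_mul _) hF, ← integral_const_mul]
  refine integral_mono_ae (hlin.const_mul _) hexp ?_
  filter_upwards [hw0] with x hx
  calc exp t * ((1 - t) * w x + F x * w x) = exp t * (F x - t + 1) * w x := by ring
    _ ≤ exp t * exp (F x - t) * w x := by gcongr; exact add_one_le_exp _
    _ = exp (F x) * w x := by rw [← exp_add, add_sub_cancel]

lemma exp_integral_mul_le_one_add (hw : Integrable w μ) (hw0 : 0 ≤ᵐ[μ] w)
    (hw1 : ∫ x, w x ∂μ ≤ 1) (hF : Integrable (fun x => F x * w x) μ)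
    (hexp : Integrable (fun x => exp (F x) * w x) μ) :
    exp (∫ x, F x * w x ∂μ) ≤ 1 + ∫ x, exp (F x) * w x ∂μ := by
  have hjensen := exp_mul_le_integral_exp_mul hw hw0 hF hexp (∫ x, F x * w x ∂μ)
  set t := ∫ x, F x * w x ∂μ
  have hmass : 0 ≤ ∫ x, w x ∂μ := integral_nonneg_of_ae hw0
  have htangent : exp t * (1 - t) ≤ 1 := by
    calc exp t * (1 - t) ≤ exp t * exp (-t) := by gcongr; linarith [add_one_le_exp (-t)]
      _ = 1 := by rw [← exp_add, add_neg_cancel, exp_zero]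
  nlinarith [mul_nonneg (sub_nonneg.2 hw1) (sub_nonneg.2 htangent)]

end Jensen

lemma two_pi_mul_exp_le_angularIntegral_exp {U : E2 → ℝ} (hU : Continuous U) {x : E2} {ρ m : ℝ}
    (hm : 2 * π * m ≤ angularIntegral U x ρ) :
    2 * π * exp m ≤ angularIntegral (fun y => exp (U y)) x ρ := by
  have hpi : -π ≤ π := by linarith [pi_pos]
  have hcont {g : ℝ → ℝ} (hg : Continuous g) :
      Integrable (fun θ => g θ * (1 : ℝ)) (volume.restrict (Ioc (-π) π)) := by
    simp only [mul_one]
    exact hg.integrableOn_Icc.mono_set Ioc_subset_Icc_self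
  have hjensen := exp_mul_le_integral_exp_mul (F := fun θ => U (x + ρ • unitVec θ))
    (integrable_const (1 : ℝ)) (Eventually.of_forall fun _ => zero_le_one)
    (hcont (by fun_prop)) (hcont (by fun_prop)) m
  simp only [mul_one, ← intervalIntegral.integral_of_le hpi, intervalIntegral.integral_const,
    smul_eq_mul] at hjensen
  unfold angularIntegral at hm ⊢
  nlinarith [mul_le_mul_of_nonneg_left hm (exp_pos m).le]

section LogKernelEstimates

variable {f : E2 → ℝ} {x : E2} {R ρ : ℝ}

lemma integrableOn_log_norm_sub_log_norm_sub_mul (hf : Continuous f) (x : E2) (R : ℝ) :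
    IntegrableOn (fun y => (log ‖y‖ - log ‖x - y‖) * f y) (ball 0 R) := by
  have hlog (z : E2) : IntegrableOn (fun y => log ‖z - y‖ * f y) (ball 0 R) :=
    integrableOn_ball_comp_sub_mul (locallyIntegrable_log_norm (by simp)) hf z 0 R
  refine ((hlog 0).sub (hlog x)).congr (Eventually.of_forall fun y => ?_)
  simp only [Pi.sub_apply, zero_sub, norm_neg, sub_mul]

lemma integrableOn_one_add_div_rpow_mul {p : ℝ} (hp : 0 ≤ p) (hp2 : p < 2) (hf : Continuous f)
    (x : E2) (R : ℝ) :
    IntegrableOn (fun y => (1 + ‖x‖ / ‖x - y‖) ^ p * f y) (ball 0 R) :=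
  integrableOn_ball_comp_sub_mul
    (locallyIntegrable_one_add_div_norm_rpow hp (by simpa using hp2) (norm_nonneg x)) hf x 0 R

lemma integrableOn_log_one_add_div_mul (hf : Continuous f) (x : E2) (R : ℝ) :
    IntegrableOn (fun y => log (1 + ‖x‖ / ‖x - y‖) * f y) (ball 0 R) := by
  have hdom : LocallyIntegrable (fun z : E2 => (1 + ‖x‖ / ‖z‖) ^ (1 : ℝ)) :=
    locallyIntegrable_one_add_div_norm_rpow zero_le_one (by simp) (norm_nonneg x)
  refine integrableOn_ball_comp_sub_mul
    (hdom.mono (g := fun z : E2 => log (1 + ‖x‖ / ‖z‖))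
      (by fun_prop : Measurable _).aestronglyMeasurable (Eventually.of_forall fun z => ?_)) hf x 0 R
  have hbase : 0 ≤ ‖x‖ / ‖z‖ := by positivity
  rw [rpow_one, norm_of_nonneg (log_nonneg (by linarith)), norm_of_nonneg (by positivity)]
  exact log_le_self (by positivity)

lemma setIntegral_ball_log_mul_le (hf : Continuous f) (hf0 : ∀ y ∈ ball 0 ρ, 0 ≤ f y)
    (hρ : 0 < ρ) (hx : 2 * ρ ≤ ‖x‖) :
    ∫ y in ball 0 ρ, (log ‖y‖ - log ‖x - y‖) * f y ≤
      log (2 * ρ / ‖x‖) * ∫ y in ball 0 ρ, f y := by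
  have hx0 : 0 < ‖x‖ := by linarith
  rw [← integral_const_mul]
  refine integral_mono_ae (integrableOn_log_norm_sub_log_norm_sub_mul hf x ρ)
    ((integrableOn_ball_of_continuous hf 0 ρ).const_mul _) ?_
  filter_upwards [ae_restrict_mem measurableSet_ball, ae_restrict_of_ae (volume.ae_ne (0 : E2))]
    with y hy hy0
  have hyρ : ‖y‖ < ρ := mem_ball_zero_iff.1 hy
  have hynorm : 0 < ‖y‖ := norm_pos_iff.2 hy0
  have hxy : ‖x‖ / 2 ≤ ‖x - y‖ := by linarith [norm_sub_norm_le x y]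
  refine mul_le_mul_of_nonneg_right ?_ (hf0 y hy)
  rw [← log_div hynorm.ne' (by linarith)]
  refine log_le_log (div_pos hynorm (by linarith)) ?_
  rw [div_le_div_iff₀ (by linarith) hx0]
  nlinarith

lemma setIntegral_log_mul_le (hf : Continuous f) {S : Set E2} (hS : MeasurableSet S)
    (hSR : S ⊆ ball 0 R) (hf0 : ∀ y ∈ S, 0 ≤ f y) :
    ∫ y in S, (log ‖y‖ - log ‖x - y‖) * f y ≤ ∫ y in S, log (1 + ‖x‖ / ‖x - y‖) * f y := by
  refine integral_mono_ae ((integrableOn_log_norm_sub_log_norm_sub_mul hf x R).mono_set hSR)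
    ((integrableOn_log_one_add_div_mul hf x R).mono_set hSR) ?_
  filter_upwards [ae_restrict_mem hS, ae_restrict_of_ae (volume.ae_ne (0 : E2)),
    ae_restrict_of_ae (volume.ae_ne x)] with y hy hy0 hyx
  have hynorm : 0 < ‖y‖ := norm_pos_iff.2 hy0
  have hxy : 0 < ‖x - y‖ := norm_sub_pos_iff.2 hyx.symm
  refine mul_le_mul_of_nonneg_right ?_ (hf0 y hy)
  rw [← log_div hynorm.ne' hxy.ne']
  refine log_le_log (div_pos hynorm hxy) ?_
  rw [div_le_iff₀ hxy, add_mul, one_mul, div_mul_cancel₀ _ hxy.ne']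
  linarith [norm_sub_norm_le y x, norm_sub_rev x y]

lemma exp_setIntegral_log_mul_le (hf : Continuous f) {S : Set E2} (hS : MeasurableSet S)
    (hSR : S ⊆ ball 0 R) (hf0 : ∀ y ∈ S, 0 ≤ f y) {p : ℝ} (hp : 0 < p) (hp2 : p < 2)
    (hmass : ∫ y in S, f y ≤ p) :
    exp (∫ y in S, log (1 + ‖x‖ / ‖x - y‖) * f y) ≤
      1 + ∫ y in S, (1 + ‖x‖ / ‖x - y‖) ^ p * (f y / p) := by
  have hweight (y : E2) : p * log (1 + ‖x‖ / ‖x - y‖) * (f y / p) =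
      log (1 + ‖x‖ / ‖x - y‖) * f y := by field_simp
  have hexp (y : E2) : exp (p * log (1 + ‖x‖ / ‖x - y‖)) = (1 + ‖x‖ / ‖x - y‖) ^ p := by
    rw [rpow_def_of_pos (by positivity), mul_comm]
  have hjensen := exp_integral_mul_le_one_add (μ := volume.restrict S)
    (F := fun y => p * log (1 + ‖x‖ / ‖x - y‖)) (w := fun y => f y / p)
    (((integrableOn_ball_of_continuous hf 0 R).mono_set hSR).div_const p)
    (by filter_upwards [ae_restrict_mem hS] with y hy using div_nonneg (hf0 y hy) hp.le)
    (by rwa [integral_div, div_le_one hp])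
    (by simp only [hweight]; exact (integrableOn_log_one_add_div_mul hf x R).mono_set hSR)
    (by simp only [hexp]; exact
      (integrableOn_one_add_div_rpow_mul hp.le hp2 (hf.div_const p) x R).mono_set hSR)
  simpa only [hweight, hexp] using hjensen

end LogKernelEstimates

/-! ### Decay and concentration of blow-up profiles -/

/-- A solution of the Liouville inequality `0 ≤ -ΔU ≤ b * exp U` on the disk of radius `R`, centred
at its maximum point: the recentred solution near a blow-up point. The concentration scale `r` is
defined by `exp (U 0) = 1 / r ^ 2`. -/
structure IsBlowupProfile (U : E2 → ℝ) (b C₀ C₁ R r : ℝ) : Prop where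
  contDiff : ContDiff ℝ 2 U
  radius_pos : 0 < R
  scale_pos : 0 < r
  neg_lapl_nonneg : ∀ y ∈ ball (0 : E2) R, 0 ≤ -lapl U y
  neg_lapl_le : ∀ y ∈ ball (0 : E2) R, -lapl U y ≤ b * exp (U y)
  exp_zero : exp (U 0) = (r ^ 2)⁻¹
  le_zero : ∀ y ∈ ball (0 : E2) R, U y ≤ U 0
  nonneg : ∀ y ∈ closedBall (0 : E2) R, 0 ≤ U y
  le_of_mem_sphere : ∀ y ∈ sphere (0 : E2) R, U y ≤ C₁
  integral_exp_le : ∫ y in ball (0 : E2) R, exp (U y) ≤ C₀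

/-- The mass of `-ΔU` in the disk of radius `ρ` about the origin, `∫ V e^U` for solutions of the
Liouville equation. -/
noncomputable def laplMass (U : E2 → ℝ) (ρ : ℝ) : ℝ := ∫ y in ball 0 ρ, -lapl U y

namespace IsBlowupProfile

variable {U : E2 → ℝ} {b C₀ C₁ R r : ℝ}

lemma continuous_neg_lapl (h : IsBlowupProfile U b C₀ C₁ R r) : Continuous fun y => -lapl U y :=
  (continuous_lapl h.contDiff).neg

lemma integrableOn_neg_lapl (h : IsBlowupProfile U b C₀ C₁ R r) (ρ : ℝ) :
    IntegrableOn (fun y => -lapl U y) (ball 0 ρ) :=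
  integrableOn_ball_of_continuous h.continuous_neg_lapl 0 ρ

lemma setIntegral_annulus_neg_lapl (h : IsBlowupProfile U b C₀ C₁ R r) {ρ : ℝ} (hρ : ρ ≤ R) :
    ∫ y in ball 0 R \ ball 0 ρ, -lapl U y = laplMass U R - laplMass U ρ :=
  setIntegral_sdiff measurableSet_ball (h.integrableOn_neg_lapl R) (ball_subset_ball hρ)

lemma angularIntegral_eq (h : IsBlowupProfile U b C₀ C₁ R r) {ρ : ℝ} (hρ : 0 < ρ) :
    angularIntegral U 0 ρ =
      2 * π * U 0 - ∫ y in ball 0 ρ, logKernel ρ (0 - y) * -lapl U y := by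
  rw [angularIntegral_eq_add_setIntegral_logKernel h.contDiff 0 hρ]
  simp only [mul_neg, integral_neg, sub_neg_eq_add]

lemma setIntegral_logKernel_mul_le (h : IsBlowupProfile U b C₀ C₁ R r) :
    ∫ y in ball 0 R, logKernel R (0 - y) * -lapl U y ≤ 2 * π * U 0 := by
  have hcircle : 0 ≤ angularIntegral U 0 R :=
    intervalIntegral.integral_nonneg (by linarith [pi_pos]) fun θ _ =>
      h.nonneg _ (add_smul_unitVec_mem_closedBall 0 h.radius_pos.le θ)
  linarith [h.angularIntegral_eq h.radius_pos]

lemma two_pi_mul_sub_le (h : IsBlowupProfile U b C₀ C₁ R r) {x : E2} (hx : ‖x‖ ≤ R) :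
    2 * π * (U x - U 0) ≤ 2 * π * C₁ + log 2 * laplMass U R +
      ∫ y in ball 0 R, (log ‖y‖ - log ‖x - y‖) * -lapl U y := by
  have hcont := h.continuous_neg_lapl
  have hkernel (k : ℝ) (z : E2) :
      IntegrableOn (fun y => logKernel k (z - y) * -lapl U y) (ball 0 R) :=
    integrableOn_ball_comp_sub_mul (locallyIntegrable_logKernel k) hcont z 0 R
  have hupper := two_pi_mul_le_add_logPotential h.contDiff h.radius_pos h.neg_lapl_nonneg
    h.le_of_mem_sphere (mem_closedBall_zero_iff.2 hx)
  have hsplit (y : E2) : (log ‖y‖ - log ‖x - y‖) * -lapl U y =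
      logKernel (2 * R) (x - y) * -lapl U y - logKernel R (0 - y) * -lapl U y -
        log 2 * -lapl U y := by
    simp only [logKernel, zero_sub, norm_neg, log_mul two_ne_zero h.radius_pos.ne']
    ring
  have hintegral : ∫ y in ball 0 R, (log ‖y‖ - log ‖x - y‖) * -lapl U y =
      logPotential (fun y => -lapl U y) R x -
        (∫ y in ball 0 R, logKernel R (0 - y) * -lapl U y) - log 2 * laplMass U R := by
    have hsub : IntegrableOn (fun y => logKernel (2 * R) (x - y) * -lapl U y -
        logKernel R (0 - y) * -lapl U y) (ball 0 R) := (hkernel _ x).sub (hkernel R 0)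
    simp only [hsplit]
    rw [integral_sub hsub ((h.integrableOn_neg_lapl R).const_mul _),
      integral_sub (hkernel _ x) (hkernel R 0), integral_const_mul, logPotential, laplMass]
  linarith [h.setIntegral_logKernel_mul_le]

lemma setIntegral_ball_log_mul_neg_lapl_le (h : IsBlowupProfile U b C₀ C₁ R r) {a ρ : ℝ}
    (hρ : 0 < ρ) (hρR : ρ ≤ R) (hcore : 2 * π * a ≤ laplMass U ρ) {x : E2} (hx : 2 * ρ ≤ ‖x‖) :
    ∫ y in ball 0 R, (log ‖y‖ - log ‖x - y‖) * -lapl U y ≤ 2 * π * (log (2 * ρ / ‖x‖) * a +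
      ∫ y in ball 0 R \ ball 0 ρ, log (1 + ‖x‖ / ‖x - y‖) * (-lapl U y / (2 * π))) := by
  have hx0 : 0 < ‖x‖ := by linarith
  have hf0 : ∀ y ∈ ball 0 R \ ball 0 ρ, 0 ≤ -lapl U y := fun y hy => h.neg_lapl_nonneg y hy.1
  have hlog : log (2 * ρ / ‖x‖) ≤ 0 := log_nonpos (by positivity) ((div_le_one hx0).2 hx)
  have hinner := setIntegral_ball_log_mul_le h.continuous_neg_lapl
    (fun y hy => h.neg_lapl_nonneg y (ball_subset_ball hρR hy)) hρ hx
  have houter := setIntegral_log_mul_le (x := x) h.continuous_neg_lapl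
    (measurableSet_ball.diff measurableSet_ball) sdiff_subset hf0
  rw [setIntegral_sdiff measurableSet_ball
    (integrableOn_log_norm_sub_log_norm_sub_mul h.continuous_neg_lapl x R)
    (ball_subset_ball hρR)] at houter
  have hscale : 2 * π * ∫ y in ball 0 R \ ball 0 ρ, log (1 + ‖x‖ / ‖x - y‖) *
      (-lapl U y / (2 * π)) =
        ∫ y in ball 0 R \ ball 0 ρ, log (1 + ‖x‖ / ‖x - y‖) * -lapl U y := by
    rw [← integral_const_mul]
    congr 1 with y
    field_simp
  have hmass : log (2 * ρ / ‖x‖) * laplMass U ρ ≤ log (2 * ρ / ‖x‖) * (2 * π * a) :=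
    mul_le_mul_of_nonpos_left hcore hlog
  unfold laplMass at hmass
  linarith

lemma exp_le_mul_rpow (h : IsBlowupProfile U b C₀ C₁ R r) (hmass : laplMass U R ≤ 10 * π)
    {a p ρ : ℝ} (hp : 0 < p) (hp2 : p < 2) (hρ : 0 < ρ) (hρR : ρ ≤ R)
    (hcore : 2 * π * a ≤ laplMass U ρ) (hrest : laplMass U R - laplMass U ρ ≤ 2 * π * p)
    {x : E2} (hx : 2 * ρ ≤ ‖x‖) (hxR : ‖x‖ ≤ R) :
    exp (U x) ≤ (r ^ 2)⁻¹ * (32 * exp C₁) * (2 * ρ / ‖x‖) ^ a *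
      (1 + ∫ y in ball 0 R \ ball 0 ρ,
        (1 + ‖x‖ / ‖x - y‖) ^ p * (-lapl U y / (2 * π) / p)) := by
  have hx0 : 0 < ‖x‖ := by linarith
  have hπ : 0 < 2 * π := by positivity
  set I := ∫ y in ball 0 R \ ball 0 ρ, log (1 + ‖x‖ / ‖x - y‖) * (-lapl U y / (2 * π))
  have hjensen : exp I ≤ 1 + ∫ y in ball 0 R \ ball 0 ρ,
      (1 + ‖x‖ / ‖x - y‖) ^ p * (-lapl U y / (2 * π) / p) :=
    exp_setIntegral_log_mul_le (h.continuous_neg_lapl.div_const _)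
      (measurableSet_ball.diff measurableSet_ball) sdiff_subset
      (fun y hy => div_nonneg (h.neg_lapl_nonneg y hy.1) hπ.le) hp hp2
      (by rwa [integral_div, h.setIntegral_annulus_neg_lapl hρR, div_le_iff₀' hπ])
  have hlog_mass : log 2 * laplMass U R ≤ log 2 * (10 * π) :=
    mul_le_mul_of_nonneg_left hmass (log_nonneg one_le_two)
  have hU : U x ≤ U 0 + (log 32 + C₁) + log (2 * ρ / ‖x‖) * a + I := by
    have hlog32 : log 32 = 5 * log 2 := by
      rw [show (32 : ℝ) = 2 ^ 5 by norm_num, log_pow]; norm_num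
    refine le_of_mul_le_mul_left ?_ hπ
    rw [hlog32]
    linarith [h.two_pi_mul_sub_le hxR, h.setIntegral_ball_log_mul_neg_lapl_le hρ hρR hcore hx]
  calc exp (U x) ≤ exp (U 0 + (log 32 + C₁) + log (2 * ρ / ‖x‖) * a + I) := exp_le_exp.2 hU
    _ = (r ^ 2)⁻¹ * (32 * exp C₁) * (2 * ρ / ‖x‖) ^ a * exp I := by
        rw [exp_add, exp_add, exp_add, exp_add, h.exp_zero, exp_log (by norm_num),
          rpow_def_of_pos (by positivity)]
    _ ≤ _ := by gcongr

lemma setIntegral_annulus_weight_le_one (h : IsBlowupProfile U b C₀ C₁ R r) {p ρ : ℝ} (hp : 0 < p)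
    (hρR : ρ ≤ R) (hrest : laplMass U R - laplMass U ρ ≤ 2 * π * p) :
    ∫ y in ball 0 R \ ball 0 ρ, -lapl U y / (2 * π) / p ≤ 1 := by
  rw [integral_div, integral_div, h.setIntegral_annulus_neg_lapl hρR, div_div,
    div_le_one (by positivity)]
  exact hrest

lemma rpow_mul_exp_le_decayPotential (h : IsBlowupProfile U b C₀ C₁ R r)
    (hmass : laplMass U R ≤ 10 * π) {a p σ ρ : ℝ} (hp : 0 < p) (hp2 : p < 2) (hρ : 0 < ρ)
    (hρR : ρ ≤ R) (hcore : 2 * π * a ≤ laplMass U ρ)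
    (hrest : laplMass U R - laplMass U ρ ≤ 2 * π * p)
    {x : E2} (hx : 2 * ρ ≤ ‖x‖) (hxR : ‖x‖ ≤ R) :
    ‖x‖ ^ σ * exp (U x) ≤ (r ^ 2)⁻¹ * (32 * exp C₁) * (2 * ρ) ^ a *
      decayPotential (volume.restrict (ball 0 R \ ball 0 ρ)) p (a - σ)
        (fun y => -lapl U y / (2 * π) / p) x := by
  have hx0 : 0 < ‖x‖ := by linarith
  have hdiag : ‖x‖ ^ (-(a - σ)) ≤ decayKernel p (a - σ) x 0 :=
    le_mul_of_one_le_right (by positivity)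
      (one_le_rpow (le_add_of_nonneg_right (by positivity)) hp.le)
  simp only [decayPotential, decayKernel, mul_assoc (‖x‖ ^ (-(a - σ))), integral_const_mul]
  simp only [decayKernel] at hdiag
  set I := ∫ y in ball 0 R \ ball 0 ρ, (1 + ‖x‖ / ‖x - y‖) ^ p * (-lapl U y / (2 * π) / p)
  calc ‖x‖ ^ σ * exp (U x)
      ≤ ‖x‖ ^ σ * ((r ^ 2)⁻¹ * (32 * exp C₁) * (2 * ρ / ‖x‖) ^ a * (1 + I)) := by
        gcongr
        exact h.exp_le_mul_rpow hmass hp hp2 hρ hρR hcore hrest hx hxR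
    _ = (r ^ 2)⁻¹ * (32 * exp C₁) * (2 * ρ) ^ a *
          (‖x‖ ^ (-(a - σ)) + ‖x‖ ^ (-(a - σ)) * I) := by
        rw [div_rpow (by positivity) hx0.le, neg_sub, rpow_sub hx0]
        field_simp
    _ ≤ _ := by gcongr

lemma integrableOn_rpow_mul_exp (h : IsBlowupProfile U b C₀ C₁ R r) {σ : ℝ} (hσ : 0 ≤ σ) (ρ : ℝ) :
    IntegrableOn (fun x => ‖x‖ ^ σ * exp (U x)) (ball 0 ρ) :=
  integrableOn_ball_of_continuous ((continuous_norm.rpow_const fun _ => Or.inr hσ).mul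
    (continuous_exp.comp h.contDiff.continuous)) 0 ρ

lemma setIntegral_annulus_rpow_mul_exp_le (h : IsBlowupProfile U b C₀ C₁ R r)
    (hmass : laplMass U R ≤ 10 * π) {a p σ ρ₀ ρ₁ : ℝ} (hp : 0 < p) (hp2 : p < 2) (hσ : 0 ≤ σ)
    (ha : 2 < a - σ) (hρ₀ : 0 < ρ₀) (hρ₀R : ρ₀ ≤ R) (hρ₁ : 2 * ρ₀ ≤ ρ₁)
    (hcore : 2 * π * a ≤ laplMass U ρ₀)
    (hrest : laplMass U R - laplMass U ρ₀ ≤ 2 * π * p) :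
    ∫ x in ball 0 R \ ball 0 ρ₁, ‖x‖ ^ σ * exp (U x) ≤
      (r ^ 2)⁻¹ * (32 * exp C₁) * (2 * ρ₀) ^ a *
        (decayConst (volume : Measure E2) p (a - σ) * ρ₁ ^ (2 - (a - σ)) * 2) := by
  set ν := (volume : Measure E2).restrict (ball 0 R \ ball 0 ρ₀)
  set w : E2 → ℝ := fun y => -lapl U y / (2 * π) / p
  have hpE : p < Module.finrank ℝ E2 := by simpa using hp2
  have haE : (Module.finrank ℝ E2 : ℝ) < a - σ := by simpa using ha
  have hρ₁pos : 0 < ρ₁ := by linarith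
  have hw : Integrable w ν :=
    (((h.integrableOn_neg_lapl R).mono_set sdiff_subset).div_const _).div_const p
  have hw0 : 0 ≤ᵐ[ν] w := by
    filter_upwards [ae_restrict_mem (measurableSet_ball.diff measurableSet_ball)] with y hy
    exact div_nonneg (div_nonneg (h.neg_lapl_nonneg y hy.1) (by positivity)) hp.le
  have hw1 : 1 + ∫ y, w y ∂ν ≤ 2 := by
    linarith [h.setIntegral_annulus_weight_le_one hp hρ₀R hrest]
  have hsub : ball 0 R \ ball 0 ρ₁ ⊆ (ball (0 : E2) ρ₁)ᶜ := fun x hx => hx.2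
  have hpot : IntegrableOn (decayPotential ν p (a - σ) w) (ball 0 ρ₁)ᶜ :=
    integrableOn_decayPotential hp.le hpE haE hρ₁pos hw
  have hpot_le := setIntegral_decayPotential_le (μ := (volume : Measure E2)) hp.le hpE haE
    hρ₁pos hw hw0
  rw [finrank_euclideanSpace_fin, Nat.cast_ofNat] at hpot_le
  calc ∫ x in ball 0 R \ ball 0 ρ₁, ‖x‖ ^ σ * exp (U x)
      ≤ ∫ x in ball 0 R \ ball 0 ρ₁,
          (r ^ 2)⁻¹ * (32 * exp C₁) * (2 * ρ₀) ^ a * decayPotential ν p (a - σ) w x := by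
        refine setIntegral_mono_on ((h.integrableOn_rpow_mul_exp hσ R).mono_set sdiff_subset)
          ((hpot.mono_set hsub).const_mul _) (measurableSet_ball.diff measurableSet_ball)
          fun x hx => ?_
        have hx1 : ρ₁ ≤ ‖x‖ := by simpa using hx.2
        exact h.rpow_mul_exp_le_decayPotential hmass hp hp2 hρ₀ hρ₀R hcore hrest
          (hρ₁.trans hx1) (mem_ball_zero_iff.1 hx.1).le
    _ = (r ^ 2)⁻¹ * (32 * exp C₁) * (2 * ρ₀) ^ a *
          ∫ x in ball 0 R \ ball 0 ρ₁, decayPotential ν p (a - σ) w x := integral_const_mul _ _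
    _ ≤ (r ^ 2)⁻¹ * (32 * exp C₁) * (2 * ρ₀) ^ a *
          (decayConst (volume : Measure E2) p (a - σ) * ρ₁ ^ (2 - (a - σ)) * 2) := by
        refine mul_le_mul_of_nonneg_left ?_ (by positivity)
        refine ((setIntegral_mono_set hpot (Eventually.of_forall (decayPotential_nonneg hw0))
          hsub.eventuallyLE).trans hpot_le).trans ?_
        exact mul_le_mul_of_nonneg_left hw1 (mul_nonneg decayConst_nonneg (by positivity))

end IsBlowupProfile

lemma integrableOn_norm_inv_ball (ρ : ℝ) : IntegrableOn (fun y : E2 => ‖y‖⁻¹) (ball 0 ρ) := by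
  have hloc : LocallyIntegrable (fun y : E2 => ‖y‖ ^ (-1 : ℝ)) :=
    locallyIntegrable_norm_rpow_neg zero_le_one (by simp)
  simp only [rpow_neg_one] at hloc
  exact (hloc.integrableOn_isCompact (isCompact_closedBall 0 ρ)).mono_set ball_subset_closedBall

lemma setIntegral_ball_norm_inv {ρ : ℝ} (hρ : 0 ≤ ρ) :
    ∫ y in ball (0 : E2) ρ, ‖y‖⁻¹ = 2 * π * ρ := by
  have hcircle : ∀ t ∈ uIoc 0 ρ, t * angularIntegral (fun y => ‖y‖⁻¹) 0 t = 2 * π := by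
    intro t ht
    have ht0 : 0 < t := (uIoc_of_le hρ ▸ ht).1
    simp only [angularIntegral, zero_add, norm_smul_unitVec ht0.le, intervalIntegral.integral_const,
      smul_eq_mul]
    field_simp
    ring
  rw [setIntegral_ball_eq_intervalIntegral hρ (integrableOn_norm_inv_ball ρ),
    intervalIntegral.integral_congr_ae (Eventually.of_forall hcircle),
    intervalIntegral.integral_const, smul_eq_mul]
  ring

lemma mul_log_div_le_setIntegral_ball {g : E2 → ℝ} {x : E2} {c r ρ : ℝ} (hg : Continuous g)
    (hg0 : ∀ y, 0 ≤ g y) (hr : 0 < r) (hrρ : r ≤ ρ)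
    (hcircle : ∀ t ∈ Icc r ρ, c * t⁻¹ ≤ t * angularIntegral g x t) :
    c * log (ρ / r) ≤ ∫ y in ball x ρ, g y := by
  have hρ : 0 < ρ := hr.trans_le hrρ
  have hpolar : IntervalIntegrable (fun t => t * angularIntegral g x t) volume 0 ρ :=
    (continuous_id.mul (continuous_angularIntegral hg x)).intervalIntegrable _ _
  have hinv : IntervalIntegrable (fun t : ℝ => t⁻¹) volume r ρ :=
    intervalIntegral.intervalIntegrable_inv
      (fun t ht => (hr.trans_le (uIcc_of_le hrρ ▸ ht).1).ne') continuousOn_id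
  calc c * log (ρ / r) = ∫ t in r..ρ, c * t⁻¹ := by
        rw [intervalIntegral.integral_const_mul, integral_inv_of_pos hr hρ]
    _ ≤ ∫ t in r..ρ, t * angularIntegral g x t :=
        intervalIntegral.integral_mono_on hrρ (hinv.const_mul c)
          ((continuous_id.mul (continuous_angularIntegral hg x)).intervalIntegrable _ _) hcircle
    _ ≤ ∫ t in 0..ρ, t * angularIntegral g x t := by
        refine intervalIntegral.integral_mono_interval hr.le hrρ le_rfl ?_ hpolar
        filter_upwards [ae_restrict_mem measurableSet_Ioc] with t ht
        exact mul_nonneg ht.1.le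
          (intervalIntegral.integral_nonneg (by linarith [pi_pos]) fun θ _ => hg0 _)
    _ = ∫ y in ball x ρ, g y :=
        (setIntegral_ball_eq_intervalIntegral hρ.le (integrableOn_ball_of_continuous hg x ρ)).symm

namespace IsBlowupProfile

variable {U : E2 → ℝ} {b C₀ C₁ R r : ℝ}

lemma exp_le (h : IsBlowupProfile U b C₀ C₁ R r) {y : E2} (hy : y ∈ ball 0 R) :
    exp (U y) ≤ (r ^ 2)⁻¹ :=
  h.exp_zero ▸ exp_le_exp.2 (h.le_zero y hy)

lemma bound_nonneg (h : IsBlowupProfile U b C₀ C₁ R r) : 0 ≤ b :=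
  nonneg_of_mul_nonneg_left
    ((h.neg_lapl_nonneg 0 (mem_ball_self h.radius_pos)).trans
      (h.neg_lapl_le 0 (mem_ball_self h.radius_pos))) (exp_pos _)

lemma laplMass_mono (h : IsBlowupProfile U b C₀ C₁ R r) {ρ₁ ρ₂ : ℝ} (hρ : ρ₁ ≤ ρ₂)
    (hρ₂ : ρ₂ ≤ R) : laplMass U ρ₁ ≤ laplMass U ρ₂ := by
  refine setIntegral_mono_set (h.integrableOn_neg_lapl ρ₂) ?_ (ball_subset_ball hρ).eventuallyLE
  filter_upwards [ae_restrict_mem measurableSet_ball] with y hy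
  exact h.neg_lapl_nonneg y (ball_subset_ball hρ₂ hy)

lemma logKernel_mul_neg_lapl_le (h : IsBlowupProfile U b C₀ C₁ R r) {ρ : ℝ} (hρ : 0 < ρ) {y : E2}
    (hy : y ∈ ball 0 R) (hy0 : y ≠ 0) :
    logKernel ρ (0 - y) * -lapl U y ≤
      log (ρ / r) * -lapl U y + (ball 0 r).indicator (fun y => b * r⁻¹ * ‖y‖⁻¹) y := by
  have hr := h.scale_pos
  have hynorm : 0 < ‖y‖ := norm_pos_iff.2 hy0
  have hsplit : logKernel ρ (0 - y) = log (ρ / r) + log (r / ‖y‖) := by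
    rw [logKernel, zero_sub, norm_neg, log_div hρ.ne' hr.ne', log_div hr.ne' hynorm.ne']
    ring
  rw [hsplit, add_mul]
  gcongr
  by_cases hyr : y ∈ ball 0 r
  · rw [indicator_of_mem hyr]
    calc log (r / ‖y‖) * -lapl U y
        ≤ r / ‖y‖ * -lapl U y :=
          mul_le_mul_of_nonneg_right (log_le_self (by positivity)) (h.neg_lapl_nonneg y hy)
      _ ≤ r / ‖y‖ * (b * (r ^ 2)⁻¹) :=
          mul_le_mul_of_nonneg_left ((h.neg_lapl_le y hy).trans
            (mul_le_mul_of_nonneg_left (h.exp_le hy) h.bound_nonneg)) (by positivity)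
      _ = b * r⁻¹ * ‖y‖⁻¹ := by field_simp
  · rw [indicator_of_notMem hyr]
    have hry : r ≤ ‖y‖ := by simpa using hyr
    exact mul_nonpos_of_nonpos_of_nonneg
      (log_nonpos (by positivity) ((div_le_one hynorm).2 hry)) (h.neg_lapl_nonneg y hy)

lemma le_angularIntegral (h : IsBlowupProfile U b C₀ C₁ R r) {ρ : ℝ} (hrρ : r ≤ ρ) (hρR : ρ ≤ R) :
    2 * π * U 0 - log (ρ / r) * laplMass U ρ - 2 * π * b ≤ angularIntegral U 0 ρ := by
  have hr := h.scale_pos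
  have hρ : 0 < ρ := hr.trans_le hrρ
  have hmass := (h.integrableOn_neg_lapl ρ).const_mul (log (ρ / r))
  have hcore : IntegrableOn ((ball (0 : E2) r).indicator fun y => b * r⁻¹ * ‖y‖⁻¹) (ball 0 ρ) :=
    (IntegrableOn.integrable_indicator ((integrableOn_norm_inv_ball r).const_mul _)
      measurableSet_ball).integrableOn
  have hcore_eq : ∫ y in ball (0 : E2) ρ, (ball (0 : E2) r).indicator
      (fun y => b * r⁻¹ * ‖y‖⁻¹) y = 2 * π * b := by
    rw [setIntegral_indicator measurableSet_ball, inter_eq_right.2 (ball_subset_ball hrρ),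
      integral_const_mul, setIntegral_ball_norm_inv hr.le]
    field_simp
  have hkernel : ∫ y in ball 0 ρ, logKernel ρ (0 - y) * -lapl U y ≤
      ∫ y in ball 0 ρ, (log (ρ / r) * -lapl U y +
        (ball 0 r).indicator (fun y => b * r⁻¹ * ‖y‖⁻¹) y) := by
    refine integral_mono_ae (integrableOn_ball_comp_sub_mul (locallyIntegrable_logKernel ρ)
      h.continuous_neg_lapl 0 0 ρ) (hmass.add hcore) ?_
    filter_upwards [ae_restrict_mem measurableSet_ball,
      ae_restrict_of_ae (volume.ae_ne (0 : E2))] with y hy hy0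
    exact h.logKernel_mul_neg_lapl_le hρ (ball_subset_ball hρR hy) hy0
  rw [integral_add hmass hcore, integral_const_mul, hcore_eq] at hkernel
  rw [h.angularIntegral_eq hρ, laplMass]
  linarith

lemma mul_inv_le_mul_angularIntegral_exp (h : IsBlowupProfile U b C₀ C₁ R r) {K ρ : ℝ} (hK : 1 < K)
    (hrρ : r ≤ ρ) (hρK : ρ ≤ K * r) (hρR : ρ ≤ R)
    (hmass : laplMass U ρ ≤ 4 * π + 2 * π / log K) :
    2 * π * exp (-1 - b) * ρ⁻¹ ≤ ρ * angularIntegral (fun y => exp (U y)) 0 ρ := by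
  have hr := h.scale_pos
  have hρ : 0 < ρ := hr.trans_le hrρ
  have hlogK : 0 < log K := log_pos hK
  have hlog : 0 ≤ log (ρ / r) := log_nonneg ((one_le_div hr).2 hrρ)
  have hlog_le : log (ρ / r) / log K ≤ 1 :=
    (div_le_one hlogK).2 (log_le_log (by positivity) ((div_le_iff₀ hr).2 hρK))
  have hmul : log (ρ / r) * laplMass U ρ ≤ 2 * π * (2 * log (ρ / r) + 1) :=
    calc log (ρ / r) * laplMass U ρ ≤ log (ρ / r) * (4 * π + 2 * π / log K) := by gcongr
      _ = 2 * π * (2 * log (ρ / r) + log (ρ / r) / log K) := by ring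
      _ ≤ 2 * π * (2 * log (ρ / r) + 1) := by gcongr
  have hexp : exp (U 0 - 2 * log (ρ / r) + (-1 - b)) = exp (-1 - b) * (ρ⁻¹ * ρ⁻¹) := by
    have hsq : exp (2 * log (ρ / r)) = (ρ / r) ^ 2 := by
      rw [← Nat.cast_ofNat, exp_nat_mul, exp_log (by positivity)]
    rw [exp_add, exp_sub, h.exp_zero, hsq]
    field_simp
  have hjensen : 2 * π * exp (U 0 - 2 * log (ρ / r) + (-1 - b)) ≤
      angularIntegral (fun y => exp (U y)) 0 ρ :=
    two_pi_mul_exp_le_angularIntegral_exp h.contDiff.continuous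
      (by linarith [h.le_angularIntegral hrρ hρR])
  rw [hexp] at hjensen
  refine (mul_le_mul_of_nonneg_left hjensen hρ.le).trans_eq' ?_
  field_simp

lemma lt_laplMass (h : IsBlowupProfile U b C₀ C₁ R r) {K : ℝ} (hK : 1 < K) (hKR : K * r ≤ R)
    (hC₀ : C₀ < 2 * π * exp (-1 - b) * log K) : 4 * π + 2 * π / log K < laplMass U (K * r) := by
  have hr := h.scale_pos
  by_contra! hmass
  have hcont : Continuous fun y => exp (U y) := continuous_exp.comp h.contDiff.continuous
  have hlower := mul_log_div_le_setIntegral_ball (x := 0) hcont (fun y => (exp_pos (U y)).le) hr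
    (le_mul_of_one_le_left hr.le hK.le) fun ρ hρ =>
      h.mul_inv_le_mul_angularIntegral_exp hK hρ.1 hρ.2 (hρ.2.trans hKR)
        ((h.laplMass_mono hρ.2 hKR).trans hmass)
  rw [mul_div_cancel_right₀ _ hr.ne'] at hlower
  have hupper : ∫ y in ball 0 (K * r), exp (U y) ≤ C₀ :=
    (setIntegral_mono_set (integrableOn_ball_of_continuous hcont 0 R)
      (Eventually.of_forall fun y => (exp_pos (U y)).le)
      (ball_subset_ball hKR).eventuallyLE).trans h.integral_exp_le
  linarith

lemma laplMass_sub_le (h : IsBlowupProfile U b C₀ C₁ R r) {ρ : ℝ} (hρR : ρ ≤ R) :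
    laplMass U R - laplMass U ρ ≤ b * ∫ y in ball 0 R \ ball 0 ρ, exp (U y) := by
  rw [← h.setIntegral_annulus_neg_lapl hρR, ← integral_const_mul]
  exact setIntegral_mono_on ((h.integrableOn_neg_lapl R).mono_set sdiff_subset)
    (((integrableOn_ball_of_continuous (continuous_exp.comp h.contDiff.continuous) 0 R).mono_set
      sdiff_subset).const_mul b) (measurableSet_ball.diff measurableSet_ball)
    fun y hy => h.neg_lapl_le y hy.1

lemma setIntegral_annulus_rpow_mul_exp_le_mul_rpow (h : IsBlowupProfile U b C₀ C₁ R r)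
    (hmass : laplMass U R ≤ 10 * π) {a p σ K M : ℝ} (hp : 0 < p) (hp2 : p < 2) (hσ : 0 ≤ σ)
    (ha : 2 < a - σ) (hK : 0 < K) (hKR : K * r ≤ R) (hKM : 2 * K ≤ M)
    (hcore : 2 * π * a ≤ laplMass U (K * r))
    (hrest : laplMass U R - laplMass U (K * r) ≤ 2 * π * p) :
    ∫ x in ball 0 R \ ball 0 (M * r), ‖x‖ ^ σ * exp (U x) ≤
      32 * exp C₁ * (2 * K) ^ a * (decayConst (volume : Measure E2) p (a - σ) * 2) *
        M ^ (2 - (a - σ)) * r ^ σ := by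
  have hr := h.scale_pos
  have hM : 0 < M := by linarith
  have hscale : (r ^ 2)⁻¹ * r ^ a * r ^ (2 - (a - σ)) = r ^ σ := by
    rw [← rpow_natCast, ← rpow_neg hr.le, ← rpow_add hr, ← rpow_add hr]
    congr 1
    push_cast
    ring
  refine (h.setIntegral_annulus_rpow_mul_exp_le hmass hp hp2 hσ ha (mul_pos hK hr) hKR
    (ρ₁ := M * r) (by nlinarith) hcore hrest).trans_eq ?_
  rw [← hscale, ← mul_assoc 2 K r, mul_rpow (by positivity) hr.le, mul_rpow hM.le hr.le]
  ring

lemma log_div_mul_laplMass_le (h : IsBlowupProfile U b C₀ C₁ R r) {ρ : ℝ} (hρ : 0 < ρ)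
    (hρR : ρ ≤ R) : log (R / ρ) * laplMass U ρ ≤ 2 * π * U 0 := by
  have hkernel : IntegrableOn (fun y => logKernel R (0 - y) * -lapl U y) (ball 0 R) :=
    integrableOn_ball_comp_sub_mul (locallyIntegrable_logKernel R) h.continuous_neg_lapl 0 0 R
  have hsub : ball (0 : E2) ρ ⊆ ball 0 R := ball_subset_ball hρR
  calc log (R / ρ) * laplMass U ρ
      ≤ ∫ y in ball 0 ρ, logKernel R (0 - y) * -lapl U y := by
        rw [laplMass, ← integral_const_mul]
        refine integral_mono_ae ((h.integrableOn_neg_lapl ρ).const_mul _)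
          (hkernel.mono_set hsub) ?_
        filter_upwards [ae_restrict_mem measurableSet_ball,
          ae_restrict_of_ae (volume.ae_ne (0 : E2))] with y hy hy0
        refine mul_le_mul_of_nonneg_right ?_ (h.neg_lapl_nonneg y (hsub hy))
        rw [logKernel, zero_sub, norm_neg, log_div h.radius_pos.ne' hρ.ne']
        exact sub_le_sub_left (log_le_log (norm_pos_iff.2 hy0) (mem_ball_zero_iff.1 hy).le) _
    _ ≤ ∫ y in ball 0 R, logKernel R (0 - y) * -lapl U y := by
        refine setIntegral_mono_set hkernel ?_ hsub.eventuallyLE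
        filter_upwards [ae_restrict_mem measurableSet_ball,
          ae_restrict_of_ae (volume.ae_ne (0 : E2))] with y hy hy0
        refine mul_nonneg (logKernel_nonneg (sub_ne_zero.2 hy0.symm) ?_) (h.neg_lapl_nonneg y hy)
        rw [zero_sub, norm_neg]
        exact (mem_ball_zero_iff.1 hy).le
    _ ≤ 2 * π * U 0 := h.setIntegral_logKernel_mul_le

lemma div_rpow_le (h : IsBlowupProfile U b C₀ C₁ R r) {a ρ : ℝ} (hρ : 0 < ρ) (hρR : ρ ≤ R)
    (hcore : 2 * π * a ≤ laplMass U ρ) : (R / ρ) ^ a ≤ (r ^ 2)⁻¹ := by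
  have hlog : 0 ≤ log (R / ρ) := log_nonneg ((one_le_div hρ).2 hρR)
  rw [← h.exp_zero, rpow_def_of_pos (div_pos h.radius_pos hρ), exp_le_exp]
  refine le_of_mul_le_mul_left ?_ two_pi_pos
  calc 2 * π * (log (R / ρ) * a) = log (R / ρ) * (2 * π * a) := by ring
    _ ≤ log (R / ρ) * laplMass U ρ := by gcongr
    _ ≤ 2 * π * U 0 := h.log_div_mul_laplMass_le hρ hρR

lemma laplMass_sub_le_mul_rpow (h : IsBlowupProfile U b C₀ C₁ R r) {κ M : ℝ} (hκ : 0 < κ)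
    (hκ1 : κ ≤ 1) (hC₀ : C₀ * κ < 2 * π * exp (-1 - b)) (hM : 2 * exp κ⁻¹ ≤ M)
    (hMR : M * r ≤ R) (hmass : laplMass U R ≤ 8 * π + π * κ) :
    laplMass U R - laplMass U (M * r) ≤
      b * (32 * exp C₁ * (2 * exp κ⁻¹) ^ (2 + κ) *
        (decayConst (volume : Measure E2) (2 - κ / 2) (2 + κ) * 2)) * M ^ (-κ) := by
  have hπκ : π * κ ≤ π * 1 := by gcongr
  have hKR : exp κ⁻¹ * r ≤ R := by nlinarith [h.scale_pos, exp_pos κ⁻¹]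
  have hcore : 2 * π * (2 + κ) ≤ laplMass U (exp κ⁻¹ * r) := by
    have hlt := h.lt_laplMass (one_lt_exp_iff.2 (inv_pos.2 hκ)) hKR
      (by rwa [log_exp, ← div_eq_mul_inv, lt_div_iff₀ hκ])
    rw [log_exp, div_inv_eq_mul] at hlt
    linarith
  have htail := h.setIntegral_annulus_rpow_mul_exp_le_mul_rpow (p := 2 - κ / 2) (a := 2 + κ)
    (σ := 0) (by linarith [pi_pos]) (by linarith) (by linarith) le_rfl (by linarith) (exp_pos κ⁻¹)
    hKR hM hcore (by linarith)
  simp only [rpow_zero, one_mul, mul_one, sub_zero] at htail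
  rw [show 2 - (2 + κ) = -κ by ring] at htail
  refine (h.laplMass_sub_le hMR).trans ?_
  rw [mul_assoc b]
  exact mul_le_mul_of_nonneg_left htail h.bound_nonneg

end IsBlowupProfile

lemma exists_laplMass_concentration (b C₀ C₁ : ℝ) {ζ : ℝ} (hζ : 0 < ζ) :
    ∃ K ≥ 1, ∃ η > 0, ∀ {U : E2 → ℝ} {R r : ℝ}, IsBlowupProfile U b C₀ C₁ R r → K * r ≤ R →
      |laplMass U R - 8 * π| ≤ η → laplMass U R ≤ 10 * π ∧
        2 * π * (4 - ζ) ≤ laplMass U (K * r) ∧ laplMass U R - laplMass U (K * r) ≤ π * ζ := by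
  set c := 2 * π * exp (-1 - b)
  have hc : 0 < c := by positivity
  obtain ⟨κ, hκ, hκc⟩ := exists_pos_mul_lt hc (max C₀ c)
  have hκ1 : κ < 1 := lt_of_mul_lt_mul_left (a := c)
    (by linarith [mul_le_mul_of_nonneg_right (le_max_right C₀ c) hκ.le]) hc.le
  have hC₀ : C₀ * κ < c := (mul_le_mul_of_nonneg_right (le_max_left C₀ c) hκ.le).trans_lt hκc
  set D := b * (32 * exp C₁ * (2 * exp κ⁻¹) ^ (2 + κ) *
    (decayConst (volume : Measure E2) (2 - κ / 2) (2 + κ) * 2))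
  have htail : Tendsto (fun K => D * K ^ (-κ)) atTop (nhds 0) := by
    simpa using (tendsto_rpow_neg_atTop hκ).const_mul D
  obtain ⟨K, ⟨hKζ, hKκ⟩, hK⟩ := (((htail.eventually_le_const (mul_pos pi_pos hζ)).and
    (eventually_ge_atTop (2 * exp κ⁻¹))).and (eventually_ge_atTop 1)).exists
  refine ⟨K, hK, min (π * κ) (π * ζ), by positivity, fun {U R r} h hKR hη => ?_⟩
  obtain ⟨hlower, hupper⟩ := abs_le.1 hη
  have hηκ := min_le_left (π * κ) (π * ζ)
  have hηζ := min_le_right (π * κ) (π * ζ)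
  have hrest := (h.laplMass_sub_le_mul_rpow hκ hκ1.le hC₀ hKκ hKR (by linarith)).trans hKζ
  have hπκ : π * κ ≤ π * 1 := by gcongr
  exact ⟨by linarith [pi_pos], by linarith, hrest⟩

lemma measureReal_ball_zero {ρ : ℝ} (hρ : 0 ≤ ρ) : volume.real (ball (0 : E2) ρ) = π * ρ ^ 2 := by
  rw [Measure.real, EuclideanSpace.volume_ball_fin_two, ENNReal.toReal_mul, ENNReal.toReal_pow,
    ENNReal.toReal_ofReal hρ, ENNReal.toReal_ofReal pi_pos.le, mul_comm]

namespace IsBlowupProfile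

variable {U : E2 → ℝ} {b C₀ C₁ R r : ℝ}

lemma setIntegral_ball_rpow_mul_exp_le (h : IsBlowupProfile U b C₀ C₁ R r) {σ ρ : ℝ} (hσ : 0 ≤ σ)
    (hρ : 0 ≤ ρ) (hρR : ρ ≤ R) :
    ∫ x in ball 0 ρ, ‖x‖ ^ σ * exp (U x) ≤ π * ρ ^ 2 * (ρ ^ σ * (r ^ 2)⁻¹) := by
  rw [← measureReal_ball_zero hρ, ← smul_eq_mul (volume.real _), ← setIntegral_const]
  refine setIntegral_mono_on (h.integrableOn_rpow_mul_exp hσ ρ)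
    (integrableOn_ball_of_continuous continuous_const 0 ρ) measurableSet_ball fun x hx => ?_
  have hxρ : ‖x‖ ≤ ρ := (mem_ball_zero_iff.1 hx).le
  have hexp := h.exp_le (ball_subset_ball hρR hx)
  gcongr

lemma setIntegral_rpow_mul_exp_le (h : IsBlowupProfile U b C₀ C₁ R r) {a σ K : ℝ} (hσ : 0 ≤ σ)
    (ha : 2 < a - σ) (hK : 0 < K) (hKR : 2 * K * r ≤ R) (hmass : laplMass U R ≤ 10 * π)
    (hcore : 2 * π * a ≤ laplMass U (K * r))
    (hrest : laplMass U R - laplMass U (K * r) ≤ 2 * π) :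
    ∫ x in ball 0 R, ‖x‖ ^ σ * exp (U x) ≤
      (π * (2 * K) ^ 2 * (2 * K) ^ σ +
        32 * exp C₁ * (2 * K) ^ a * (decayConst (volume : Measure E2) 1 (a - σ) * 2) *
          (2 * K) ^ (2 - (a - σ))) * r ^ σ := by
  have hr := h.scale_pos
  have hinner := h.setIntegral_ball_rpow_mul_exp_le hσ (ρ := 2 * K * r) (by positivity) hKR
  have houter := h.setIntegral_annulus_rpow_mul_exp_le_mul_rpow hmass one_pos one_lt_two hσ ha hK
    (by nlinarith) le_rfl hcore (by linarith)
  have hscale : π * (2 * K * r) ^ 2 * ((2 * K * r) ^ σ * (r ^ 2)⁻¹) =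
      π * (2 * K) ^ 2 * (2 * K) ^ σ * r ^ σ := by
    rw [mul_rpow (by positivity) hr.le]
    field_simp
  rw [setIntegral_sdiff measurableSet_ball (h.integrableOn_rpow_mul_exp hσ R)
    (ball_subset_ball hKR)] at houter
  linarith

lemma radius_mul_rpow_le (h : IsBlowupProfile U b C₀ C₁ R r) {a s K : ℝ} (ha : 2 < a)
    (hs : s ≤ 1) (hK : 0 < K) (hKR : K * r ≤ R) (hcore : 2 * π * a ≤ laplMass U (K * r)) :
    R * r ^ (s - 1) ≤ K ^ (a * ((1 - s) / (a - 2))) * R ^ (1 - a * ((1 - s) / (a - 2))) := by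
  have hr := h.scale_pos
  have hR := h.radius_pos
  have hKr : 0 < K * r := mul_pos hK hr
  set t := (1 - s) / (a - 2)
  have ht : 0 ≤ t := div_nonneg (by linarith) (by linarith)
  have hexponent : a * t = 1 - s + 2 * t := by
    have hmul : (a - 2) * t = 1 - s := mul_div_cancel₀ _ (by linarith)
    linarith
  have hpow := rpow_le_rpow (by positivity) (h.div_rpow_le hKr hKR hcore) ht
  rw [← rpow_mul (by positivity), div_rpow hR.le hKr.le, div_le_iff₀ (by positivity),
    mul_rpow hK.le hr.le] at hpow
  have hscale : ((r ^ 2)⁻¹) ^ t * r ^ (a * t) * r ^ (s - 1) = 1 := by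
    rw [← rpow_natCast, ← rpow_neg hr.le, ← rpow_mul hr.le, ← rpow_add hr, ← rpow_add hr,
      hexponent]
    push_cast
    ring_nf
    exact rpow_zero r
  calc R * r ^ (s - 1) = R ^ (1 - a * t) * R ^ (a * t) * r ^ (s - 1) := by
        rw [← rpow_add hR, sub_add_cancel, rpow_one]
    _ ≤ R ^ (1 - a * t) * (((r ^ 2)⁻¹) ^ t * (K ^ (a * t) * r ^ (a * t))) * r ^ (s - 1) := by
        gcongr
    _ = K ^ (a * t) * R ^ (1 - a * t) * (((r ^ 2)⁻¹) ^ t * r ^ (a * t) * r ^ (s - 1)) := by ring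
    _ = K ^ (a * t) * R ^ (1 - a * t) := by rw [hscale, mul_one]

end IsBlowupProfile

/-! ### The weighted gradient estimate -/

lemma divergence_smul {g : E2 → ℝ} {X : E2 → E2 →L[ℝ] ℝ} {y : E2} (hg : DifferentiableAt ℝ g y)
    (hX : DifferentiableAt ℝ X y) :
    divergence (fun z => g z • X z) y = g y * divergence X y +
      (pd 0 g y * X y (EuclideanSpace.single 0 1) +
        pd 1 g y * X y (EuclideanSpace.single 1 1)) := by
  simp only [divergence, fderiv_fun_smul hg hX, pd, add_apply, smul_apply, smul_eq_mul,
    ContinuousLinearMap.smulRight_apply]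
  ring

lemma integral_divergence_of_hasCompactSupport {X : E2 → E2 →L[ℝ] ℝ} (hX : ContDiff ℝ 1 X)
    (hc : HasCompactSupport X) : ∫ y, divergence X y = 0 := by
  obtain ⟨ρ, hρ, hsupp⟩ := hc.isCompact.isBounded.subset_ball_lt 0 0
  have hzero {y : E2} (hy : y ∉ ball 0 ρ) : y ∉ tsupport X := fun hmem => hy (hsupp hmem)
  have hdiv (y : E2) (hy : y ∉ ball 0 ρ) : divergence X y = 0 := by
    rw [divergence, fderiv_of_notMem_tsupport ℝ (hzero hy)]
    simp
  have hflux (θ : ℝ) : X (0 + ρ • unitVec θ) = 0 :=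
    image_eq_zero_of_notMem_tsupport (hzero fun hmem =>
      (sphere_disjoint_ball.ne_of_mem (add_smul_unitVec_mem_sphere 0 hρ.le θ) hmem) rfl)
  rw [← setIntegral_eq_integral_of_forall_compl_eq_zero hdiv,
    setIntegral_ball_divergence hX 0 hρ.le]
  simp only [hflux, zero_apply, intervalIntegral.integral_zero, mul_zero]

lemma continuous_pd {g : E2 → ℝ} (hg : ContDiff ℝ 1 g) (j : Fin 2) : Continuous (pd j g) :=
  (hg.continuous_fderiv one_ne_zero).clm_apply continuous_const

lemma pd_exp {U : E2 → ℝ} {y : E2} (hU : DifferentiableAt ℝ U y) (j : Fin 2) :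
    pd j (fun z => exp (U z)) y = exp (U y) * pd j U y := by
  simp [pd, fderiv_exp hU]

lemma pd_sq_mul_exp {χ U : E2 → ℝ} {y : E2} (hχ : DifferentiableAt ℝ χ y)
    (hU : DifferentiableAt ℝ U y) (j : Fin 2) :
    pd j (fun z => χ z ^ 2 * exp (U z)) y =
      (2 * χ y * pd j χ y + χ y ^ 2 * pd j U y) * exp (U y) := by
  rw [pd, fderiv_fun_mul (hχ.fun_pow 2) hU.exp, fderiv_exp hU, fderiv_fun_pow 2 hχ]
  simp only [pd, add_apply, smul_apply, smul_eq_mul, nsmul_eq_mul]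
  push_cast
  ring

/-- The squared length of the gradient of `g`. -/
noncomputable def gradSq (g : E2 → ℝ) (y : E2) : ℝ := pd 0 g y ^ 2 + pd 1 g y ^ 2

lemma gradSq_nonneg (g : E2 → ℝ) (y : E2) : 0 ≤ gradSq g y := by
  unfold gradSq
  positivity

lemma continuous_gradSq {g : E2 → ℝ} (hg : ContDiff ℝ 1 g) : Continuous (gradSq g) :=
  ((continuous_pd hg 0).pow 2).add ((continuous_pd hg 1).pow 2)

lemma gradSq_eq_zero_of_notMem_tsupport {g : E2 → ℝ} {y : E2} (hy : y ∉ tsupport g) :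
    gradSq g y = 0 := by
  simp [gradSq, pd, fderiv_of_notMem_tsupport ℝ hy]

lemma hasCompactSupport_gradSq {g : E2 → ℝ} (hc : HasCompactSupport g) :
    HasCompactSupport (gradSq g) :=
  HasCompactSupport.intro hc fun _ => gradSq_eq_zero_of_notMem_tsupport

lemma gradSq_comp_smul (g : E2 → ℝ) (c : ℝ) (y : E2) :
    gradSq (fun z => g (c • z)) y = c ^ 2 * gradSq g (c • y) := by
  simp only [gradSq, pd, fderiv_comp_smul, smul_apply, smul_eq_mul]
  ring

lemma sq_mul_gradSq_mul_exp_le {χ U : E2 → ℝ} (hχ : ContDiff ℝ 1 χ) (hU : ContDiff ℝ 2 U) (y : E2) :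
    χ y ^ 2 * gradSq U y * exp (U y) ≤
      2 * divergence (fun z => (χ z ^ 2 * exp (U z)) • fderiv ℝ U z) y +
        (2 * (χ y ^ 2 * -lapl U y * exp (U y)) + 4 * (gradSq χ y * exp (U y))) := by
  have hχd : DifferentiableAt ℝ χ y := hχ.differentiable one_ne_zero y
  have hUd : DifferentiableAt ℝ U y := hU.differentiable two_ne_zero y
  have hUd' := (hU.fderiv_right (m := 1) le_rfl).differentiable one_ne_zero y
  have hyoung (j : Fin 2) :
      0 ≤ (χ y * pd j U y + 2 * pd j χ y) ^ 2 * exp (U y) := by positivity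
  rw [divergence_smul ((hχd.fun_pow 2).fun_mul hUd.exp) hUd', ← lapl_eq_divergence_fderiv hU,
    pd_sq_mul_exp hχd hUd, pd_sq_mul_exp hχd hUd, ← pd, ← pd, gradSq, gradSq]
  linarith [hyoung 0, hyoung 1]

lemma integrable_sq_mul_gradSq_mul_exp {χ U : E2 → ℝ} (hχ : Continuous χ)
    (hc : HasCompactSupport χ) (hU : ContDiff ℝ 1 U) :
    Integrable fun y => χ y ^ 2 * gradSq U y * exp (U y) := by
  have hgrad := continuous_gradSq hU
  have hU' := hU.continuous
  refine Continuous.integrable_of_hasCompactSupport (by fun_prop)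
    (HasCompactSupport.intro hc fun y hy => ?_)
  simp [image_eq_zero_of_notMem_tsupport hy]

lemma integral_sq_mul_gradSq_mul_exp_le {χ U : E2 → ℝ} (hχ : ContDiff ℝ 1 χ)
    (hc : HasCompactSupport χ) (hU : ContDiff ℝ 2 U) :
    ∫ y, χ y ^ 2 * gradSq U y * exp (U y) ≤
      ∫ y, (2 * (χ y ^ 2 * -lapl U y * exp (U y)) + 4 * (gradSq χ y * exp (U y))) := by
  have hχ' := hχ.continuous
  have hU' := hU.continuous
  have hlapl := continuous_lapl hU
  have hgrad := continuous_gradSq hχ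
  have hX : ContDiff ℝ 1 fun z => (χ z ^ 2 * exp (U z)) • fderiv ℝ U z :=
    ((hχ.pow 2).mul (hU.of_le one_le_two).exp).smul (hU.fderiv_right le_rfl)
  have hXc : HasCompactSupport fun z => (χ z ^ 2 * exp (U z)) • fderiv ℝ U z :=
    HasCompactSupport.intro hc fun y hy => by simp [image_eq_zero_of_notMem_tsupport hy]
  have hdiv : Integrable (divergence fun z => (χ z ^ 2 * exp (U z)) • fderiv ℝ U z) :=
    (continuous_divergence hX).integrable_of_hasCompactSupport
      (HasCompactSupport.intro hXc fun y hy => by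
        simp [divergence, fderiv_of_notMem_tsupport ℝ hy])
  have hrest : Integrable fun y =>
      2 * (χ y ^ 2 * -lapl U y * exp (U y)) + 4 * (gradSq χ y * exp (U y)) :=
    Continuous.integrable_of_hasCompactSupport (by fun_prop) (HasCompactSupport.intro hc fun y hy =>
      by simp [image_eq_zero_of_notMem_tsupport hy, gradSq_eq_zero_of_notMem_tsupport hy])
  refine (integral_mono (integrable_sq_mul_gradSq_mul_exp hχ' hc (hU.of_le one_le_two))
    ((hdiv.const_mul 2).add hrest) (sq_mul_gradSq_mul_exp_le hχ hU)).trans_eq ?_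
  simp only [Pi.add_apply]
  rw [integral_add (hdiv.const_mul 2) hrest, integral_const_mul,
    integral_divergence_of_hasCompactSupport hX hXc, mul_zero, zero_add]

lemma exists_cutoff : ∃ M : ℝ, 0 ≤ M ∧ ∀ R > 0, ∃ χ : E2 → ℝ, ContDiff ℝ 1 χ ∧
    tsupport χ ⊆ ball 0 R ∧ (∀ y, χ y ∈ Icc 0 1) ∧ (∀ y ∈ ball 0 (R / 2), χ y = 1) ∧
      ∀ y, gradSq χ y ≤ M / R ^ 2 := by
  let φ : ContDiffBump (0 : E2) := ⟨1 / 2, 3 / 4, by norm_num, by norm_num⟩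
  have hφ : ContDiff ℝ 1 φ := φ.contDiff
  obtain ⟨M, hM⟩ := (hasCompactSupport_gradSq φ.hasCompactSupport).exists_bound_of_continuous
    (continuous_gradSq hφ)
  refine ⟨M, (norm_nonneg _).trans (hM 0), fun R hR => ⟨fun y => φ (R⁻¹ • y),
    hφ.comp (contDiff_const_smul _), fun y hy => ?_, fun y => ⟨φ.nonneg, φ.le_one⟩,
    fun y hy => φ.one_of_mem_closedBall ?_, fun y => ?_⟩⟩
  · have hmem := tsupport_comp_subset_preimage φ (continuous_const_smul R⁻¹) hy
    rw [mem_preimage, φ.tsupport_eq, mem_closedBall_zero_iff, norm_smul, norm_inv,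
      norm_of_nonneg hR.le, inv_mul_le_iff₀ hR] at hmem
    have hrOut : φ.rOut = 3 / 4 := rfl
    rw [hrOut] at hmem
    exact mem_ball_zero_iff.2 (by linarith)
  · rw [mem_closedBall_zero_iff, norm_smul, norm_inv, norm_of_nonneg hR.le, inv_mul_le_iff₀ hR]
    have hrIn : φ.rIn = 1 / 2 := rfl
    rw [hrIn]
    linarith [mem_ball_zero_iff.1 hy]
  · rw [gradSq_comp_smul, inv_pow, mul_comm, ← div_eq_mul_inv]
    gcongr
    exact (le_norm_self _).trans (hM _)

lemma setIntegral_gradSq_mul_exp_le {χ U : E2 → ℝ} {B G R ρ : ℝ} (hχ : ContDiff ℝ 1 χ)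
    (hsupp : tsupport χ ⊆ ball 0 R) (hχ01 : ∀ y, χ y ∈ Icc 0 1) (hχ1 : ∀ y ∈ ball 0 ρ, χ y = 1)
    (hgrad : ∀ y, gradSq χ y ≤ G) (hU : ContDiff ℝ 2 U) (hB : 0 ≤ B)
    (hlapl : ∀ y ∈ ball 0 R, -lapl U y ≤ B) :
    ∫ y in ball 0 ρ, gradSq U y * exp (U y) ≤
      (2 * B + 4 * G) * ∫ y in ball 0 R, exp (U y) := by
  have hc : HasCompactSupport χ :=
    HasCompactSupport.of_support_subset_isCompact (isCompact_closedBall 0 R)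
      ((subset_tsupport χ).trans (hsupp.trans ball_subset_closedBall))
  have hzero (y : E2) (hy : y ∉ ball 0 R) : y ∉ tsupport χ := fun hmem => hy (hsupp hmem)
  have hχ' := hχ.continuous
  have hU' := hU.continuous
  have hcl := continuous_lapl hU
  have hcg := continuous_gradSq hχ
  calc ∫ y in ball 0 (ρ), gradSq U y * exp (U y)
      = ∫ y in ball 0 (ρ), χ y ^ 2 * gradSq U y * exp (U y) :=
        setIntegral_congr_fun measurableSet_ball fun y hy => by simp [hχ1 y hy]
    _ ≤ ∫ y, χ y ^ 2 * gradSq U y * exp (U y) :=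
        setIntegral_le_integral (integrable_sq_mul_gradSq_mul_exp hχ' hc (hU.of_le one_le_two))
          (Eventually.of_forall fun y => mul_nonneg
            (mul_nonneg (sq_nonneg _) (gradSq_nonneg U y)) (exp_pos _).le)
    _ ≤ ∫ y, (2 * (χ y ^ 2 * -lapl U y * exp (U y)) + 4 * (gradSq χ y * exp (U y))) :=
        integral_sq_mul_gradSq_mul_exp_le hχ hc hU
    _ = ∫ y in ball 0 R, (2 * (χ y ^ 2 * -lapl U y * exp (U y)) + 4 * (gradSq χ y * exp (U y))) :=
        (setIntegral_eq_integral_of_forall_compl_eq_zero fun y hy => by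
          simp [image_eq_zero_of_notMem_tsupport (hzero y hy),
            gradSq_eq_zero_of_notMem_tsupport (hzero y hy)]).symm
    _ ≤ ∫ y in ball 0 R, (2 * B + 4 * G) * exp (U y) := by
        refine setIntegral_mono_on (integrableOn_ball_of_continuous (by fun_prop) 0 R)
          (integrableOn_ball_of_continuous (by fun_prop) 0 R) measurableSet_ball fun y hy => ?_
        have hsq : χ y ^ 2 * -lapl U y ≤ B :=
          (mul_le_mul_of_nonneg_left (hlapl y hy) (sq_nonneg _)).trans
            (mul_le_of_le_one_left hB (pow_le_one₀ (hχ01 y).1 (hχ01 y).2))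
        have hsum : 2 * (χ y ^ 2 * -lapl U y) + 4 * gradSq χ y ≤ 2 * B + 4 * G := by
          linarith [hgrad y]
        linarith [mul_le_mul_of_nonneg_right hsum (exp_pos (U y)).le]
    _ = (2 * B + 4 * G) * ∫ y in ball 0 R, exp (U y) := integral_const_mul _ _

lemma exists_setIntegral_half_ball_gradSq_mul_exp_le : ∃ M : ℝ, 0 ≤ M ∧ ∀ {U : E2 → ℝ} {B R : ℝ},
    ContDiff ℝ 2 U → 0 ≤ B → 0 < R → (∀ y ∈ ball 0 R, -lapl U y ≤ B) →
      ∫ y in ball 0 (R / 2), gradSq U y * exp (U y) ≤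
        (2 * B + 4 * (M / R ^ 2)) * ∫ y in ball 0 R, exp (U y) := by
  obtain ⟨M, hM, hcutoff⟩ := exists_cutoff
  refine ⟨M, hM, fun {U B R} hU hB hR hlapl => ?_⟩
  obtain ⟨χ, hχ, hsupp, hχ01, hχ1, hgrad⟩ := hcutoff R hR
  exact setIntegral_gradSq_mul_exp_le hχ hsupp hχ01 hχ1 hgrad hU hB hlapl

/-! ### The Pohozaev term -/

lemma divergence_smul_proj {W : E2 → ℝ} (hW : Differentiable ℝ W) (j : Fin 2) :
    divergence (fun y => W y • EuclideanSpace.proj j) = pd j W := by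
  ext y
  rw [divergence_smul (hW y) (differentiableAt_const _)]
  fin_cases j <;> simp [divergence]

lemma abs_setIntegral_ball_pd_le {W : E2 → ℝ} (hW : ContDiff ℝ 1 W) (j : Fin 2) {x : E2} {ρ S : ℝ}
    (hρ : 0 ≤ ρ) (hS : ∀ y ∈ sphere x ρ, |W y| ≤ S) :
    |∫ y in ball x ρ, pd j W y| ≤ 2 * π * ρ * S := by
  have hflux (θ : ℝ) :
      ‖(W (x + ρ • unitVec θ) • EuclideanSpace.proj j : E2 →L[ℝ] ℝ) (unitVec θ)‖ ≤ S := by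
    have hcoord : ‖unitVec θ j‖ ≤ 1 := norm_unitVec θ ▸ PiLp.norm_apply_le (unitVec θ) j
    change ‖W (x + ρ • unitVec θ) * unitVec θ j‖ ≤ S
    rw [norm_mul]
    exact (mul_le_of_le_one_right (norm_nonneg _) hcoord).trans
      (hS _ (add_smul_unitVec_mem_sphere x hρ θ))
  have hX : ContDiff ℝ 1 fun y => W y • (EuclideanSpace.proj j : E2 →L[ℝ] ℝ) :=
    hW.smul contDiff_const
  have hbound := intervalIntegral.norm_integral_le_of_norm_le_const (a := -π) (b := π)
    fun θ _ => hflux θ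
  rw [sub_neg_eq_add, ← two_mul, abs_of_pos two_pi_pos] at hbound
  rw [← divergence_smul_proj (hW.differentiable one_ne_zero) j,
    setIntegral_ball_divergence hX x hρ, abs_mul, abs_of_nonneg hρ]
  exact (mul_le_mul_of_nonneg_left hbound hρ).trans_eq (by ring)

lemma pd_sq_le_gradSq (g : E2 → ℝ) (y : E2) (j : Fin 2) : pd j g y ^ 2 ≤ gradSq g y := by
  unfold gradSq
  fin_cases j
  · exact le_add_of_nonneg_right (sq_nonneg _)
  · exact le_add_of_nonneg_left (sq_nonneg _)

lemma abs_mul_le_weighted_sq (p : ℝ) {q τ : ℝ} (hτ : 0 < τ) :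
    |p| * q ≤ 1 / 2 * (τ * p ^ 2 + τ⁻¹ * q ^ 2) := by
  have hsq := mul_nonneg (inv_pos.2 hτ).le (sq_nonneg (τ * |p| - q))
  have hexpand : τ⁻¹ * (τ * |p| - q) ^ 2 = τ * p ^ 2 - 2 * (|p| * q) + τ⁻¹ * q ^ 2 := by
    rw [← sq_abs p]
    field_simp
    ring
  linarith

lemma rpow_mul_inv_sq_add_inv_rpow_mul_rpow {r : ℝ} (hr : 0 < r) (M D s : ℝ) :
    r ^ (1 + s) * (M * (r ^ 2)⁻¹) + (r ^ (1 + s))⁻¹ * (D * r ^ (2 * s)) =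
      (M + D) * r ^ (s - 1) := by
  have hgrad : r ^ (1 + s) * (r ^ 2)⁻¹ = r ^ (s - 1) := by
    rw [← rpow_two, ← rpow_neg hr.le, ← rpow_add hr]
    ring_nf
  have hweight : (r ^ (1 + s))⁻¹ * r ^ (2 * s) = r ^ (s - 1) := by
    rw [← rpow_neg hr.le, ← rpow_add hr]
    ring_nf
  linear_combination M * hgrad + D * hweight

section Pohozaev

variable {U g : E2 → ℝ} {A s ρ : ℝ}

lemma abs_setIntegral_pd_mul_le (hU : ContDiff ℝ 1 U) (hg : Continuous g) (hA : 0 ≤ A)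
    (hs : 0 ≤ s) (hgU : ∀ y ∈ ball 0 ρ, |g y| ≤ A * ‖y‖ ^ s * exp (U y)) (j : Fin 2) {τ : ℝ}
    (hτ : 0 < τ) :
    |∫ y in ball 0 ρ, pd j U y * g y| ≤
      A / 2 * (τ * (∫ y in ball 0 ρ, gradSq U y * exp (U y)) +
        τ⁻¹ * ∫ y in ball 0 ρ, ‖y‖ ^ (2 * s) * exp (U y)) := by
  have hpd := continuous_pd hU j
  have hU' := hU.continuous
  have hgrad := continuous_gradSq hU
  have hpow : Continuous fun y : E2 => ‖y‖ ^ (2 * s) :=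
    continuous_norm.rpow_const fun _ => Or.inr (by positivity)
  have hint₁ : IntegrableOn (fun y => gradSq U y * exp (U y)) (ball 0 ρ) :=
    integrableOn_ball_of_continuous (by fun_prop) 0 ρ
  have hint₂ : IntegrableOn (fun y => ‖y‖ ^ (2 * s) * exp (U y)) (ball 0 ρ) :=
    integrableOn_ball_of_continuous (by fun_prop) 0 ρ
  rw [← integral_const_mul τ, ← integral_const_mul τ⁻¹, ← integral_add (hint₁.const_mul τ)
    (hint₂.const_mul τ⁻¹), ← integral_const_mul]
  refine abs_integral_le_integral_abs.trans (setIntegral_mono_on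
    (integrableOn_ball_of_continuous (by fun_prop) 0 ρ)
    (integrableOn_ball_of_continuous (by fun_prop) 0 ρ) measurableSet_ball fun y hy => ?_)
  have hweighted : |pd j U y| * ‖y‖ ^ s ≤ 1 / 2 * (τ * gradSq U y + τ⁻¹ * ‖y‖ ^ (2 * s)) := by
    rw [mul_comm 2 s, rpow_mul (norm_nonneg y), rpow_two]
    refine (abs_mul_le_weighted_sq _ hτ).trans ?_
    gcongr
    exact pd_sq_le_gradSq U y j
  calc |pd j U y * g y| ≤ |pd j U y| * (A * ‖y‖ ^ s * exp (U y)) := by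
        rw [abs_mul]
        exact mul_le_mul_of_nonneg_left (hgU y hy) (abs_nonneg _)
    _ = A * exp (U y) * (|pd j U y| * ‖y‖ ^ s) := by ring
    _ ≤ A * exp (U y) * (1 / 2 * (τ * gradSq U y + τ⁻¹ * ‖y‖ ^ (2 * s))) := by gcongr
    _ = A / 2 * (τ * (gradSq U y * exp (U y)) + τ⁻¹ * (‖y‖ ^ (2 * s) * exp (U y))) := by ring

lemma abs_setIntegral_pd_mul_neg_lapl_le (hU : ContDiff ℝ 2 U) (hA : 0 ≤ A) (hs : 0 ≤ s)
    {v S : ℝ} (hv : 0 ≤ v) (hρ : 0 ≤ ρ)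
    (hholder : ∀ y ∈ ball 0 ρ, |-lapl U y - v * exp (U y)| ≤ A * ‖y‖ ^ s * exp (U y))
    (hS : ∀ y ∈ sphere 0 ρ, U y ≤ S) (j : Fin 2) {τ : ℝ} (hτ : 0 < τ) :
    |∫ y in ball 0 ρ, pd j U y * -lapl U y| ≤ v * (2 * π * ρ * exp S) +
      A / 2 * (τ * (∫ y in ball 0 ρ, gradSq U y * exp (U y)) +
        τ⁻¹ * ∫ y in ball 0 ρ, ‖y‖ ^ (2 * s) * exp (U y)) := by
  have hU₁ : ContDiff ℝ 1 U := hU.of_le one_le_two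
  have hU' := hU.continuous
  have hlapl := continuous_lapl hU
  have hpd := continuous_pd hU₁ j
  have hsplit : ∫ y in ball 0 ρ, pd j U y * -lapl U y =
      v * (∫ y in ball 0 ρ, pd j (fun z => exp (U z)) y) +
        ∫ y in ball 0 ρ, pd j U y * (-lapl U y - v * exp (U y)) := by
    simp only [pd_exp (hU.differentiable two_ne_zero _)]
    rw [← integral_const_mul, ← integral_add (integrableOn_ball_of_continuous (by fun_prop) 0 ρ)
      (integrableOn_ball_of_continuous (by fun_prop) 0 ρ)]
    congr with y
    ring
  rw [hsplit]
  refine (abs_add_le _ _).trans (add_le_add ?_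
    (abs_setIntegral_pd_mul_le hU₁ (by fun_prop) hA hs hholder j hτ))
  rw [abs_mul, abs_of_nonneg hv]
  exact mul_le_mul_of_nonneg_left (abs_setIntegral_ball_pd_le hU₁.exp j hρ
    fun y hy => (abs_exp _).trans_le (exp_le_exp.2 (hS y hy))) hv

end Pohozaev

lemma IsBlowupProfile.exists_setIntegral_gradSq_mul_exp_le (b C₀ : ℝ) : ∃ M : ℝ,
    ∀ {U : E2 → ℝ} {C₁ R r : ℝ}, IsBlowupProfile U b C₀ C₁ R r → r ≤ R →
      ∫ y in ball 0 (R / 2), gradSq U y * exp (U y) ≤ M * (r ^ 2)⁻¹ := by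
  obtain ⟨M, hM, hgrad⟩ := exists_setIntegral_half_ball_gradSq_mul_exp_le
  refine ⟨(2 * b + 4 * M) * C₀, fun {U C₁ R r} h hrR => ?_⟩
  have hr := h.scale_pos
  have hb := h.bound_nonneg
  have hlapl (y : E2) (hy : y ∈ ball 0 R) : -lapl U y ≤ b * (r ^ 2)⁻¹ :=
    (h.neg_lapl_le y hy).trans (mul_le_mul_of_nonneg_left (h.exp_le hy) hb)
  calc ∫ y in ball 0 (R / 2), gradSq U y * exp (U y)
      ≤ (2 * (b * (r ^ 2)⁻¹) + 4 * (M / R ^ 2)) * ∫ y in ball 0 R, exp (U y) :=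
        hgrad h.contDiff (by positivity) h.radius_pos hlapl
    _ ≤ (2 * (b * (r ^ 2)⁻¹) + 4 * (M / r ^ 2)) * C₀ := by
        gcongr
        exact h.integral_exp_le
    _ = (2 * b + 4 * M) * C₀ * (r ^ 2)⁻¹ := by ring

/-- A family of blow-up profiles along a filter, on disks shrinking to a point, with concentration
scales `r i` negligible with respect to the radii `R i`, and whose masses tend to the mass `8 * π`
of a single bubble. -/
structure IsBlowupSequence {ι : Type*} (l : Filter ι) (U : ι → E2 → ℝ) (b C₀ C₁ : ℝ)
    (R r : ι → ℝ) : Prop where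
  isBlowupProfile : ∀ i, IsBlowupProfile (U i) b C₀ C₁ (R i) (r i)
  tendsto_radius : Tendsto R l (nhds 0)
  tendsto_scale_div_radius : Tendsto (fun i => r i / R i) l (nhds 0)
  tendsto_laplMass : Tendsto (fun i => laplMass (U i) (R i)) l (nhds (8 * π))

namespace IsBlowupSequence

variable {ι : Type*} {l : Filter ι} {U : ι → E2 → ℝ} {b C₀ C₁ : ℝ} {R r : ι → ℝ}

lemma eventually_mul_scale_le (h : IsBlowupSequence l U b C₀ C₁ R r) {K : ℝ} (hK : 0 < K) :
    ∀ᶠ i in l, K * r i ≤ R i := by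
  filter_upwards [h.tendsto_scale_div_radius.eventually_le_const (inv_pos.2 hK)] with i hi
  rwa [div_le_iff₀ (h.isBlowupProfile i).radius_pos, le_inv_mul_iff₀ hK] at hi

lemma exists_eventually_laplMass_concentration (h : IsBlowupSequence l U b C₀ C₁ R r) {ζ : ℝ}
    (hζ : 0 < ζ) : ∃ K ≥ 1, ∀ᶠ i in l, 2 * K * r i ≤ R i ∧ laplMass (U i) (R i) ≤ 10 * π ∧
      2 * π * (4 - ζ) ≤ laplMass (U i) (K * r i) ∧
        laplMass (U i) (R i) - laplMass (U i) (K * r i) ≤ π * ζ := by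
  obtain ⟨K, hK, η, hη, hconc⟩ := exists_laplMass_concentration b C₀ C₁ hζ
  refine ⟨K, hK, ?_⟩
  filter_upwards [h.eventually_mul_scale_le (K := 2 * K) (by positivity),
    h.tendsto_laplMass.eventually (closedBall_mem_nhds _ hη)] with i hKR hmass
  have hKr : 0 < K * r i := mul_pos (by positivity) (h.isBlowupProfile i).scale_pos
  exact ⟨hKR, hconc (h.isBlowupProfile i) (by linarith) hmass⟩

lemma tendsto_radius_mul_rpow (h : IsBlowupSequence l U b C₀ C₁ R r) {s : ℝ} (hs : 1 / 2 < s)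
    (hs1 : s ≤ 1) : Tendsto (fun i => R i * r i ^ (s - 1)) l (nhds 0) := by
  obtain ⟨K, hK, hconc⟩ := h.exists_eventually_laplMass_concentration (ζ := 2 * s - 1) (by linarith)
  set a := 4 - (2 * s - 1)
  set t := (1 - s) / (a - 2)
  have hexponent : 0 < 1 - a * t := by
    have ha : 0 < a - 2 := by linarith
    rw [sub_pos, ← mul_div_assoc, div_lt_one ha]
    nlinarith
  have hlim : Tendsto (fun i => K ^ (a * t) * R i ^ (1 - a * t)) l (nhds 0) := by
    simpa [zero_rpow hexponent.ne'] using
      (h.tendsto_radius.rpow_const (Or.inr hexponent.le)).const_mul (K ^ (a * t))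
  refine squeeze_zero' (Eventually.of_forall fun i => ?_) ?_ hlim
  · have hR := (h.isBlowupProfile i).radius_pos
    have hr := (h.isBlowupProfile i).scale_pos
    positivity
  · filter_upwards [hconc] with i ⟨hKR, _, hcore, _⟩
    have hKr : 0 < K * r i := mul_pos (by positivity) (h.isBlowupProfile i).scale_pos
    exact (h.isBlowupProfile i).radius_mul_rpow_le (by linarith) hs1 (by positivity) (by linarith)
      hcore

lemma exists_eventually_setIntegral_rpow_mul_exp_le (h : IsBlowupSequence l U b C₀ C₁ R r)
    {s : ℝ} (hs : 0 ≤ s) (hs1 : s < 1) :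
    ∃ D, ∀ᶠ i in l, ∫ y in ball 0 (R i), ‖y‖ ^ (2 * s) * exp (U i y) ≤ D * r i ^ (2 * s) := by
  obtain ⟨K, hK, hconc⟩ := h.exists_eventually_laplMass_concentration (ζ := 1 - s) (by linarith)
  refine Exists.intro _ (hconc.mono fun i ⟨hKR, hmass, hcore, _⟩ =>
    (h.isBlowupProfile i).setIntegral_rpow_mul_exp_le (σ := 2 * s) (by positivity) (by linarith)
      (by positivity) hKR hmass hcore ?_)
  nlinarith [pi_pos]

lemma exists_eventually_abs_setIntegral_pd_mul_neg_lapl_le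
    (h : IsBlowupSequence l U b C₀ C₁ R r) {A s S : ℝ} (hA : 0 ≤ A) (hs : 0 ≤ s) (hs1 : s < 1)
    {v ρ : ι → ℝ} (hv : ∀ i, v i ∈ Icc 0 b) (hρ : ∀ i, 0 ≤ ρ i) (hρR : ∀ i, ρ i ≤ R i / 2)
    (hholder : ∀ i, ∀ y ∈ ball 0 (R i),
      |-lapl (U i) y - v i * exp (U i y)| ≤ A * ‖y‖ ^ s * exp (U i y))
    (hS : ∀ i, ∀ y ∈ sphere 0 (ρ i), U i y ≤ S) (j : Fin 2) :
    ∃ D, ∀ᶠ i in l, |∫ y in ball 0 (ρ i), pd j (U i) y * -lapl (U i) y| ≤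
      b * (2 * π * R i * exp S) + D * r i ^ (s - 1) := by
  obtain ⟨M, hgrad⟩ := IsBlowupProfile.exists_setIntegral_gradSq_mul_exp_le b C₀
  obtain ⟨D, hweight⟩ := h.exists_eventually_setIntegral_rpow_mul_exp_le hs hs1
  refine ⟨A / 2 * (M + D), ?_⟩
  filter_upwards [hweight, h.eventually_mul_scale_le one_pos] with i hi hrR
  rw [one_mul] at hrR
  have hprof := h.isBlowupProfile i
  have hr := hprof.scale_pos
  have := hprof.radius_pos
  have hρR' : ρ i ≤ R i := by linarith [hρR i]
  have hU₁ : ContDiff ℝ 1 (U i) := hprof.contDiff.of_le one_le_two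
  have hgrad' : ∫ y in ball 0 (ρ i), gradSq (U i) y * exp (U i y) ≤ M * (r i ^ 2)⁻¹ :=
    (setIntegral_mono_set (integrableOn_ball_of_continuous
      ((continuous_gradSq hU₁).mul hU₁.continuous.rexp) 0 _)
      (Eventually.of_forall fun y => mul_nonneg (gradSq_nonneg _ y) (exp_pos _).le)
      (ball_subset_ball (hρR i)).eventuallyLE).trans (hgrad hprof hrR)
  have hweight' : ∫ y in ball 0 (ρ i), ‖y‖ ^ (2 * s) * exp (U i y) ≤ D * r i ^ (2 * s) :=
    (setIntegral_mono_set (hprof.integrableOn_rpow_mul_exp (by positivity) _)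
      (Eventually.of_forall fun y => by positivity)
      (ball_subset_ball hρR').eventuallyLE).trans hi
  calc |∫ y in ball 0 (ρ i), pd j (U i) y * -lapl (U i) y|
      ≤ v i * (2 * π * ρ i * exp S) +
        A / 2 * (r i ^ (1 + s) * (∫ y in ball 0 (ρ i), gradSq (U i) y * exp (U i y)) +
          (r i ^ (1 + s))⁻¹ * ∫ y in ball 0 (ρ i), ‖y‖ ^ (2 * s) * exp (U i y)) :=
        abs_setIntegral_pd_mul_neg_lapl_le hprof.contDiff hA hs (hv i).1 (hρ i)
          (fun y hy => hholder i y (ball_subset_ball hρR' hy)) (hS i) j (by positivity)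
    _ ≤ b * (2 * π * R i * exp S) + A / 2 * (r i ^ (1 + s) * (M * (r i ^ 2)⁻¹) +
          (r i ^ (1 + s))⁻¹ * (D * r i ^ (2 * s))) := by
        have := (hv i).2
        have := hprof.bound_nonneg
        have := hρ i
        gcongr
    _ = b * (2 * π * R i * exp S) + A / 2 * (M + D) * r i ^ (s - 1) := by
        rw [rpow_mul_inv_sq_add_inv_rpow_mul_rpow hr]
        ring

lemma tendsto_radius_mul_setIntegral_pd_mul_neg_lapl
    (h : IsBlowupSequence l U b C₀ C₁ R r) {A s S : ℝ} (hA : 0 ≤ A) (hs : 1 / 2 < s) (hs1 : s < 1)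
    {v ρ : ι → ℝ} (hv : ∀ i, v i ∈ Icc 0 b) (hρ : ∀ i, 0 ≤ ρ i) (hρR : ∀ i, ρ i ≤ R i / 2)
    (hholder : ∀ i, ∀ y ∈ ball 0 (R i),
      |-lapl (U i) y - v i * exp (U i y)| ≤ A * ‖y‖ ^ s * exp (U i y))
    (hS : ∀ i, ∀ y ∈ sphere 0 (ρ i), U i y ≤ S) (j : Fin 2) :
    Tendsto (fun i => R i * ∫ y in ball 0 (ρ i), pd j (U i) y * -lapl (U i) y) l (nhds 0) := by
  obtain ⟨D, hD⟩ := h.exists_eventually_abs_setIntegral_pd_mul_neg_lapl_le hA (by linarith) hs1 hv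
    hρ hρR hholder hS j
  have hlim : Tendsto (fun i => b * (2 * π) * exp S * (R i * R i) + D * (R i * r i ^ (s - 1))) l
      (nhds 0) := by
    simpa using ((h.tendsto_radius.mul h.tendsto_radius).const_mul (b * (2 * π) * exp S)).add
      ((h.tendsto_radius_mul_rpow hs hs1.le).const_mul D)
  refine squeeze_zero_norm' ?_ hlim
  filter_upwards [hD] with i hi
  have hR := (h.isBlowupProfile i).radius_pos
  rw [norm_mul, norm_of_nonneg hR.le, norm_eq_abs]
  exact (mul_le_mul_of_nonneg_left hi hR.le).trans_eq (by ring)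

end IsBlowupSequence

/-! ### Localization at a blow-up point -/

section Localization

variable {E F : Type*} [NormedAddCommGroup E] [NormedSpace ℝ E] [FiniteDimensional ℝ E]
  [NormedAddCommGroup F] [NormedSpace ℝ F] {n : ℕ∞} {u : E → F}

lemma exists_contDiff_eventuallyEq_nhdsSet {K Ω : Set E} (hK : IsClosed K) (hΩ : IsOpen Ω)
    (hKΩ : K ⊆ Ω) (hu : ContDiffOn ℝ n u Ω) : ∃ W : E → F, ContDiff ℝ n W ∧ W =ᶠ[nhdsSet K] u := by
  obtain ⟨O, hO, hKO, hOΩ⟩ := normal_exists_closure_subset hK hΩ hKΩ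
  obtain ⟨χ, hχ_one, hχ_zero, -⟩ := exists_contMDiffMap_one_nhds_of_subset_interior (n := n)
    (modelWithCornersSelf ℝ E) hK (hKO.trans (interior_maximal subset_closure hO))
  have hχ : ContDiff ℝ n χ := χ.contMDiff.contDiff
  refine ⟨fun y => χ y • u y, contDiff_iff_contDiffAt.2 fun y => ?_, ?_⟩
  · by_cases hy : y ∈ closure O
    · exact hχ.contDiffAt.smul (hu.contDiffAt (hΩ.mem_nhds (hOΩ hy)))
    · refine (contDiffAt_const (c := 0)).congr_of_eventuallyEq ?_
      filter_upwards [isClosed_closure.isOpen_compl.mem_nhds hy] with z hz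
      rw [hχ_zero z hz, zero_smul]
  · filter_upwards [hχ_one] with y hy
    rw [hy, one_smul]

lemma exists_contDiff_eventuallyEq_comp_const_add {x : E} {t : ℝ} {Ω : Set E} (hΩ : IsOpen Ω)
    (ht : closedBall x t ⊆ Ω) (hu : ContDiffOn ℝ n u Ω) :
    ∃ U : E → F, ContDiff ℝ n U ∧ U =ᶠ[nhdsSet (closedBall 0 t)] fun y => u (x + y) :=
  exists_contDiff_eventuallyEq_nhdsSet isClosed_closedBall
    (hΩ.preimage (continuous_const_add x))
    (fun _ hy => ht (add_mem_closedBall_iff_norm.2 (mem_closedBall_zero_iff.1 hy)))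
    (hu.comp (contDiff_const.add contDiff_id).contDiffOn (mapsTo_preimage _ _))

end Localization

lemma pd_eventuallyEq {f g : E2 → ℝ} {y : E2} (h : f =ᶠ[nhds y] g) (j : Fin 2) :
    pd j f =ᶠ[nhds y] pd j g :=
  h.fderiv.mono fun z hz => by rw [pd, hz, pd]

lemma lapl_eq_of_eventuallyEq {f g : E2 → ℝ} {y : E2} (h : f =ᶠ[nhds y] g) :
    lapl f y = lapl g y :=
  congrArg₂ (· + ·) (pd_eventuallyEq (pd_eventuallyEq h 0) 0).eq_of_nhds
    (pd_eventuallyEq (pd_eventuallyEq h 1) 1).eq_of_nhds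

lemma pd_comp_const_add (f : E2 → ℝ) (x : E2) (j : Fin 2) :
    pd j (fun y => f (x + y)) = fun y => pd j f (x + y) := by
  ext y
  rw [pd, fderiv_comp_add_left, pd]

lemma lapl_comp_const_add (f : E2 → ℝ) (x y : E2) :
    lapl (fun y => f (x + y)) y = lapl f (x + y) := by
  simp only [lapl, pd_comp_const_add]

lemma setIntegral_ball_comp_const_add {E F : Type*} [SeminormedAddCommGroup E] [MeasurableSpace E]
    [BorelSpace E] {μ : Measure E} [μ.IsAddLeftInvariant] [NormedAddCommGroup F] [NormedSpace ℝ F]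
    (f : E → F) (x : E) (ρ : ℝ) :
    ∫ y in ball 0 ρ, f (x + y) ∂μ = ∫ y in ball x ρ, f y ∂μ := by
  have h := (measurePreserving_add_left μ x).setIntegral_preimage_emb
    (measurableEmbedding_addLeft x) f (ball x ρ)
  rwa [preimage_add_ball, sub_self] at h

lemma infDist_sphere_eq_sub_norm {E : Type*} [NormedAddCommGroup E] [NormedSpace ℝ E]
    [Nontrivial E] {x : E} {R : ℝ} (hx : x ∈ closedBall 0 R) :
    infDist x (sphere 0 R) = R - ‖x‖ := by
  have hxR : ‖x‖ ≤ R := mem_closedBall_zero_iff.1 hx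
  have hR : 0 ≤ R := (norm_nonneg x).trans hxR
  obtain ⟨e, he, hxe⟩ : ∃ e : E, ‖e‖ = 1 ∧ x = ‖x‖ • e := by
    obtain rfl | hx₀ := eq_or_ne x 0
    · obtain ⟨e, he⟩ := exists_norm_eq E zero_le_one
      exact ⟨e, he, by simp⟩
    · exact ⟨‖x‖⁻¹ • x, norm_smul_inv_norm hx₀, (smul_inv_smul₀ (norm_ne_zero_iff.2 hx₀) x).symm⟩
  refine le_antisymm ?_ ((le_infDist (NormedSpace.sphere_nonempty.2 hR)).2 fun y hy => ?_)
  · have hRe : R • e ∈ sphere (0 : E) R := by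
      rw [mem_sphere_zero_iff_norm, norm_smul, he, mul_one, norm_of_nonneg hR]
    refine (infDist_le_dist_of_mem hRe).trans_eq ?_
    nth_rw 1 [hxe]
    rw [dist_eq_norm', ← sub_smul, norm_smul, he, mul_one, norm_of_nonneg (sub_nonneg.2 hxR)]
  · rw [dist_eq_norm', ← mem_sphere_zero_iff_norm.1 hy]
    exact norm_sub_norm_le y x

lemma forall_mem_sphere_mul_of_forall_smul {E : Type*} [NormedAddCommGroup E] [NormedSpace ℝ E]
    {P : E → Prop} {δ ε : ℝ} (hδ : 0 < δ) (h : ∀ z, ‖z‖ = ε → P (δ • z)) :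
    ∀ y ∈ sphere 0 (δ * ε), P y := fun y hy => by
  rw [← smul_inv_smul₀ hδ.ne' y]
  refine h _ ?_
  rw [norm_smul, mem_sphere_zero_iff_norm.1 hy, norm_inv, norm_of_nonneg hδ.le,
    inv_mul_cancel_left₀ hδ.ne']

lemma angularIntegral_le_of_neg_lapl_nonneg {u : E2 → ℝ} {x : E2} {ρ : ℝ} {Ω : Set E2}
    (hΩ : IsOpen Ω) (hu : ContDiffOn ℝ 2 u Ω) (hρ : 0 < ρ) (hρΩ : closedBall x ρ ⊆ Ω)
    (hlapl : ∀ y ∈ ball x ρ, 0 ≤ -lapl u y) :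
    angularIntegral u x ρ ≤ 2 * π * u x := by
  obtain ⟨W, hW, hWu⟩ := exists_contDiff_eventuallyEq_nhdsSet (n := 2) isClosed_closedBall hΩ hρΩ hu
  have heq (y : E2) (hy : y ∈ closedBall x ρ) : W y = u y := hWu.self_of_nhdsSet hy
  have hnonpos : ∫ y in ball x ρ, logKernel ρ (x - y) * lapl W y ≤ 0 := by
    refine integral_nonpos_of_ae ?_
    filter_upwards [ae_restrict_mem measurableSet_ball, ae_restrict_of_ae (volume.ae_ne x)]
      with y hy hyx
    have hWuy := hWu.filter_mono (nhds_le_nhdsSet (ball_subset_closedBall hy))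
    rw [lapl_eq_of_eventuallyEq hWuy]
    exact mul_nonpos_of_nonneg_of_nonpos (logKernel_nonneg (sub_ne_zero.2 hyx.symm)
      (mem_ball_iff_norm'.1 hy).le) (neg_nonneg.1 (hlapl y hy))
  have hmean := angularIntegral_eq_add_setIntegral_logKernel hW x hρ
  simp only [angularIntegral, heq _ (add_smul_unitVec_mem_closedBall x hρ.le _),
    heq x (mem_closedBall_self hρ.le)] at hmean
  rw [angularIntegral]
  linarith

lemma nonneg_of_neg_lapl_nonneg {u : E2 → ℝ} {c : E2} {R : ℝ}
    (hu : ContDiffOn ℝ 2 u (closedBall c R)) (hlapl : ∀ y ∈ ball c R, 0 ≤ -lapl u y)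
    (hbdry : ∀ y ∈ sphere c R, 0 ≤ u y) {x : E2}
    (hx : x ∈ closedBall c R) : 0 ≤ u x := by
  refine neg_nonpos.1 (le_of_forall_le_angularIntegral (w := fun y => -u y) (C := 0)
    hu.continuousOn.neg (fun x hx => ?_) (fun y hy => neg_nonpos.2 (hbdry y hy)) hx)
  obtain ⟨T, hT, hsub⟩ := Metric.isOpen_iff.1 isOpen_ball x hx
  have hhalf : closedBall x (T / 2) ⊆ ball c R := (closedBall_subset_ball (by linarith)).trans hsub
  refine ⟨T / 2, by positivity, hhalf, ?_⟩
  have hmean := angularIntegral_le_of_neg_lapl_nonneg isOpen_ball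
    (hu.mono ball_subset_closedBall) (half_pos hT) hhalf
    fun y hy => hlapl y (hhalf (ball_subset_closedBall hy))
  rw [angularIntegral, intervalIntegral.integral_neg, mul_neg]
  exact neg_le_neg hmean

/-- A solution of the Dirichlet problem `-Δu = V * exp u` on the unit disk, with a potential
bounded by `b` and total mass at most `C₀`. -/
structure IsLiouvilleSolution (u V : E2 → ℝ) (b C₀ : ℝ) : Prop where
  contDiffOn : ContDiffOn ℝ 2 u (closedBall 0 1)
  potential_mem_Icc : ∀ x ∈ ball (0 : E2) 1, V x ∈ Icc 0 b
  neg_lapl_eq : ∀ x ∈ ball (0 : E2) 1, -lapl u x = V x * exp (u x)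
  eq_zero : ∀ x ∈ sphere (0 : E2) 1, u x = 0
  integral_exp_le : ∫ y in ball (0 : E2) 1, exp (u y) ≤ C₀

namespace IsLiouvilleSolution

variable {u V U : E2 → ℝ} {b C₀ R : ℝ} {x y : E2}

lemma nonneg (h : IsLiouvilleSolution u V b C₀) (hx : x ∈ closedBall 0 1) : 0 ≤ u x := by
  refine nonneg_of_neg_lapl_nonneg h.contDiffOn (fun y hy => ?_)
    (fun y hy => (h.eq_zero y hy).ge) hx
  rw [h.neg_lapl_eq y hy]
  exact mul_nonneg (h.potential_mem_Icc y hy).1 (exp_pos _).le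

lemma neg_lapl_translate_eq (h : IsLiouvilleSolution u V b C₀) (hR : closedBall x R ⊆ ball 0 1)
    (hUu : U =ᶠ[nhdsSet (closedBall 0 R)] fun y => u (x + y)) (hy : y ∈ closedBall 0 R) :
    -lapl U y = V (x + y) * exp (u (x + y)) := by
  rw [lapl_eq_of_eventuallyEq (hUu.filter_mono (nhds_le_nhdsSet hy)), lapl_comp_const_add]
  exact h.neg_lapl_eq _ (hR (add_mem_closedBall_iff_norm.2 (mem_closedBall_zero_iff.1 hy)))

lemma setIntegral_exp_le (h : IsLiouvilleSolution u V b C₀) {K : Set E2} (hK : K ⊆ ball 0 1) :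
    ∫ y in K, exp (u y) ≤ C₀ := by
  have hint : IntegrableOn (fun y => exp (u y)) (ball 0 1) :=
    (h.contDiffOn.continuousOn.rexp.integrableOn_compact
      (isCompact_closedBall 0 1)).mono_set ball_subset_closedBall
  exact (setIntegral_mono_set hint (Eventually.of_forall fun y => (exp_pos _).le)
    hK.eventuallyLE).trans h.integral_exp_le

lemma isBlowupProfile (h : IsLiouvilleSolution u V b C₀) (hR₀ : 0 < R)
    (hR : closedBall x R ⊆ ball 0 1) (hmax : ∀ y ∈ closedBall 0 1, u y ≤ u x) {C₁ : ℝ}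
    (hC₁ : ∀ y ∈ sphere 0 R, u (x + y) ≤ C₁) (hU : ContDiff ℝ 2 U)
    (hUu : U =ᶠ[nhdsSet (closedBall 0 R)] fun y => u (x + y)) :
    IsBlowupProfile U b C₀ C₁ R (exp (-u x / 2)) := by
  have heq (y : E2) (hy : y ∈ closedBall 0 R) : U y = u (x + y) := hUu.self_of_nhdsSet hy
  have hmem (y : E2) (hy : y ∈ closedBall 0 R) : x + y ∈ ball 0 1 :=
    hR (add_mem_closedBall_iff_norm.2 (mem_closedBall_zero_iff.1 hy))
  have hzero : U 0 = u x := by rw [heq 0 (mem_closedBall_self hR₀.le), add_zero]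
  have hlapl (y : E2) (hy : y ∈ ball 0 R) : -lapl U y = V (x + y) * exp (U y) := by
    rw [heq y (ball_subset_closedBall hy)]
    exact h.neg_lapl_translate_eq hR hUu (ball_subset_closedBall hy)
  have hpotential (y : E2) (hy : y ∈ ball 0 R) : V (x + y) ∈ Icc 0 b :=
    h.potential_mem_Icc _ (hmem y (ball_subset_closedBall hy))
  refine ⟨hU, hR₀, exp_pos _, fun y hy => ?_, fun y hy => ?_, ?_, fun y hy => ?_, fun y hy => ?_,
    fun y hy => ?_, ?_⟩
  · rw [hlapl y hy]
    exact mul_nonneg (hpotential y hy).1 (exp_pos _).le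
  · rw [hlapl y hy]
    exact mul_le_mul_of_nonneg_right (hpotential y hy).2 (exp_pos _).le
  · rw [hzero, ← exp_nat_mul, ← exp_neg]
    congr 1
    push_cast
    ring
  · rw [hzero, heq y (ball_subset_closedBall hy)]
    exact hmax _ (ball_subset_closedBall (hmem y (ball_subset_closedBall hy)))
  · rw [heq y hy]
    exact h.nonneg (ball_subset_closedBall (hmem y hy))
  · rw [heq y (sphere_subset_closedBall hy)]
    exact hC₁ y hy
  · rw [setIntegral_congr_fun measurableSet_ball fun y hy =>
      congrArg exp (heq y (ball_subset_closedBall hy)),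
      setIntegral_ball_comp_const_add fun y => exp (u y)]
    exact h.setIntegral_exp_le (ball_subset_closedBall.trans hR)

lemma laplMass_translate_eq (h : IsLiouvilleSolution u V b C₀) (hR : closedBall x R ⊆ ball 0 1)
    (hUu : U =ᶠ[nhdsSet (closedBall 0 R)] fun y => u (x + y)) :
    laplMass U R = ∫ y in ball x R, V y * exp (u y) := by
  rw [laplMass, ← setIntegral_ball_comp_const_add (fun y => V y * exp (u y))]
  exact setIntegral_congr_fun measurableSet_ball fun y hy =>
    h.neg_lapl_translate_eq hR hUu (ball_subset_closedBall hy)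

lemma setIntegral_pd_mul_neg_lapl_translate_eq (h : IsLiouvilleSolution u V b C₀)
    (hR : closedBall x R ⊆ ball 0 1) (hUu : U =ᶠ[nhdsSet (closedBall 0 R)] fun y => u (x + y))
    {ρ : ℝ} (hρ : ρ ≤ R) (j : Fin 2) :
    ∫ y in ball 0 ρ, pd j U y * -lapl U y = ∫ y in ball x ρ, pd j u y * (V y * exp (u y)) := by
  rw [← setIntegral_ball_comp_const_add (fun y => pd j u y * (V y * exp (u y)))]
  refine setIntegral_congr_fun measurableSet_ball fun y hy => ?_
  have hyR : y ∈ closedBall 0 R := closedBall_subset_closedBall hρ (ball_subset_closedBall hy)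
  have hpd := (pd_eventuallyEq (hUu.filter_mono (nhds_le_nhdsSet hyR)) j).eq_of_nhds
  rw [pd_comp_const_add] at hpd
  simp only [hpd, h.neg_lapl_translate_eq hR hUu hyR]

lemma abs_neg_lapl_translate_sub_le (h : IsLiouvilleSolution u V b C₀)
    (hR₁ : R ≤ 1) (hR : closedBall x R ⊆ ball 0 1)
    (hUu : U =ᶠ[nhdsSet (closedBall 0 R)] fun y => u (x + y)) {A s σ : ℝ} (hσ : 0 ≤ σ) (hσs : σ ≤ s)
    (hV : ∀ y ∈ ball 0 1, ∀ z ∈ ball 0 1, |V y - V z| ≤ A * ‖y - z‖ ^ s) (hy : y ∈ ball 0 R) :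
    |-lapl U y - V x * exp (U y)| ≤ |A| * ‖y‖ ^ σ * exp (U y) := by
  have hyR : y ∈ closedBall 0 R := ball_subset_closedBall hy
  have hR₀ : 0 ≤ R := (norm_nonneg y).trans (mem_closedBall_zero_iff.1 hyR)
  have hholder : |V (x + y) - V x| ≤ A * ‖y‖ ^ s := by
    simpa only [add_sub_cancel_left] using hV (x + y)
      (hR (add_mem_closedBall_iff_norm.2 (mem_closedBall_zero_iff.1 hyR))) x
      (hR (mem_closedBall_self hR₀))
  have hpow : ‖y‖ ^ s ≤ ‖y‖ ^ σ := rpow_le_rpow_of_exponent_ge' (norm_nonneg y)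
    ((mem_closedBall_zero_iff.1 hyR).trans hR₁) hσ hσs
  have heq : U y = u (x + y) := hUu.self_of_nhdsSet hyR
  rw [h.neg_lapl_translate_eq hR hUu hyR, ← heq, ← sub_mul, abs_mul, abs_exp]
  gcongr
  exact hholder.trans (mul_le_mul (le_abs_self A) hpow (by positivity) (abs_nonneg A))

lemma exists_isBlowupSequence {ι : Type*} {l : Filter ι} {u V : ι → E2 → ℝ} {x : ι → E2}
    {R r : ι → ℝ} {C₁ : ℝ} (h : ∀ i, IsLiouvilleSolution (u i) (V i) b C₀) (hR₀ : ∀ i, 0 < R i)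
    (hR : ∀ i, closedBall (x i) (R i) ⊆ ball 0 1)
    (hmax : ∀ i, ∀ y ∈ closedBall 0 1, u i y ≤ u i (x i))
    (hC₁ : ∀ i, ∀ y ∈ sphere 0 (R i), u i (x i + y) ≤ C₁) (hr : ∀ i, r i = exp (-u i (x i) / 2))
    (hRlim : Tendsto R l (nhds 0)) (hrR : Tendsto (fun i => r i / R i) l (nhds 0))
    (hmass : Tendsto (fun i => ∫ y in ball (x i) (R i), V i y * exp (u i y)) l (nhds (8 * π))) :
    ∃ U : ι → E2 → ℝ, IsBlowupSequence l U b C₀ C₁ R r ∧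
      ∀ i, U i =ᶠ[nhdsSet (closedBall 0 (R i))] fun y => u i (x i + y) := by
  choose U hU hUu using fun i => exists_contDiff_eventuallyEq_comp_const_add (n := 2) isOpen_ball
    (hR i) ((h i).contDiffOn.mono ball_subset_closedBall)
  refine ⟨U, ⟨fun i => ?_, hRlim, hrR, ?_⟩, hUu⟩
  · rw [hr i]
    exact (h i).isBlowupProfile (hR₀ i) (hR i) (hmax i) (hC₁ i) (hU i) (hUu i)
  · simpa only [(h _).laplMass_translate_eq (hR _) (hUu _)] using hmass

lemma tendsto_radius_mul_setIntegral_pd_mul {ι : Type*} {l : Filter ι} {u V : ι → E2 → ℝ}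
    {x : ι → E2} {R r ρ : ι → ℝ} {A s C₁ S : ℝ} (h : ∀ i, IsLiouvilleSolution (u i) (V i) b C₀)
    (hs : 1 / 2 < s)
    (hV : ∀ i, ∀ y ∈ ball 0 1, ∀ z ∈ ball 0 1, |V i y - V i z| ≤ A * ‖y - z‖ ^ s)
    (hR₀ : ∀ i, 0 < R i) (hR₁ : ∀ i, R i ≤ 1) (hR : ∀ i, closedBall (x i) (R i) ⊆ ball 0 1)
    (hmax : ∀ i, ∀ y ∈ closedBall 0 1, u i y ≤ u i (x i))
    (hC₁ : ∀ i, ∀ y ∈ sphere 0 (R i), u i (x i + y) ≤ C₁) (hr : ∀ i, r i = exp (-u i (x i) / 2))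
    (hRlim : Tendsto R l (nhds 0)) (hrR : Tendsto (fun i => r i / R i) l (nhds 0))
    (hmass : Tendsto (fun i => ∫ y in ball (x i) (R i), V i y * exp (u i y)) l (nhds (8 * π)))
    (hρ : ∀ i, 0 ≤ ρ i) (hρR : ∀ i, ρ i ≤ R i / 2)
    (hS : ∀ i, ∀ y ∈ sphere 0 (ρ i), u i (x i + y) ≤ S) (j : Fin 2) :
    Tendsto (fun i => R i * ∫ y in ball (x i) (ρ i), pd j (u i) y * (V i y * exp (u i y))) l
      (nhds 0) := by
  obtain ⟨U, hseq, hUu⟩ := exists_isBlowupSequence h hR₀ hR hmax hC₁ hr hRlim hrR hmass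
  have hρR' i : ρ i ≤ R i := (hρR i).trans (half_le_self (hR₀ i).le)
  have hpotential i : V i (x i) ∈ Icc 0 b :=
    (h i).potential_mem_Icc _ (hR i (mem_closedBall_self (hR₀ i).le))
  have hUS i y (hy : y ∈ sphere 0 (ρ i)) : U i y ≤ S := by
    rw [(hUu i).self_of_nhdsSet (closedBall_subset_closedBall (hρR' i)
      (sphere_subset_closedBall hy))]
    exact hS i y hy
  simp only [← (h _).setIntegral_pd_mul_neg_lapl_translate_eq (hR _) (hUu _) (hρR' _)]
  -- The target exponent must stay below `1`, and Hölder continuity passes to smaller exponents.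
  exact hseq.tendsto_radius_mul_setIntegral_pd_mul_neg_lapl (s := min s (3 / 4)) (abs_nonneg A)
    (lt_min hs (by norm_num)) (min_lt_of_right_lt (by norm_num)) hpotential hρ hρR
    (fun i _ => (h i).abs_neg_lapl_translate_sub_le (hR₁ i) (hR i) (hUu i) (by positivity)
      (min_le_left _ _) (hV i)) hUS j

end IsLiouvilleSolution

end Blowup

theorem stmt16
    (b A s C₀ : ℝ) (hs1 : 1/2 < s) (hs2 : s ≤ 1)
    (V u : ℕ → E2 → ℝ) (x_ : ℕ → E2) (δ r : ℕ → ℝ) (v : ℕ → E2 → ℝ)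
    (hu : ∀ i, ContDiffOn ℝ 2 (u i) (closedBall (0:E2) 1))
    (hVb : ∀ i, ∀ x ∈ ball (0:E2) 1, 0 ≤ V i x ∧ V i x ≤ b)
    (hVhol : ∀ i, ∀ x ∈ ball (0:E2) 1, ∀ y ∈ ball (0:E2) 1, |V i x - V i y| ≤ A * ‖x - y‖ ^ s)
    (hpde : ∀ i, ∀ x ∈ ball (0:E2) 1, -(lapl (u i) x) = V i x * Real.exp (u i x))
    (hbc : ∀ i, ∀ x ∈ sphere (0:E2) 1, u i x = 0)
    (hint : ∀ i, (∫ y in ball (0:E2) 1, Real.exp (u i y)) ≤ C₀)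
    (hxmem : ∀ i, x_ i ∈ ball (0:E2) 1)
    (hmax : ∀ i, ∀ y ∈ closedBall (0:E2) 1, u i y ≤ u i (x_ i))
    (hblow : Tendsto (fun i => u i (x_ i)) atTop atTop)
    (hδ : ∀ i, δ i = Metric.infDist (x_ i) (sphere (0:E2) 1))
    (hδ0 : Tendsto δ atTop (nhds 0))
    (hr : ∀ i, r i = Real.exp (-(u i (x_ i)) / 2))
    (hrδ : Tendsto (fun i => r i / δ i) atTop (nhds 0))
    (hmass : Tendsto (fun i => ∫ y in ball (x_ i) (δ i / 2), V i y * Real.exp (u i y)) atTop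
      (nhds (8 * Real.pi)))
    (hbound : ∀ ε : ℝ, 0 < ε → ε < 1 → ∃ Cε : ℝ, ∀ i, ∀ y : E2, ‖y‖ = ε →
      u i (x_ i + δ i • y) ≤ Cε)
    (hv : ∀ i θ, v i θ = u i (x_ i + r i • θ) - u i (x_ i)) :
    ∀ ε' : ℝ, ε' ∈ Set.Ioo (0:ℝ) (1/4) →
      Tendsto (fun i => δ i * ∫ y in ball (x_ i) (δ i * ε'),
        pd 0 (u i) y * (V i y * Real.exp (u i y))) atTop (nhds 0) := by
  intro ε' hε'
  obtain ⟨C₁, hC₁⟩ := hbound 2⁻¹ (by norm_num) (by norm_num)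
  obtain ⟨S, hS⟩ := hbound ε' hε'.1 (by linarith [hε'.2])
  have hsol i : IsLiouvilleSolution (u i) (V i) b C₀ := ⟨hu i, hVb i, hpde i, hbc i, hint i⟩
  have hδx i : δ i = 1 - ‖x_ i‖ :=
    (hδ i).trans (infDist_sphere_eq_sub_norm (ball_subset_closedBall (hxmem i)))
  have hδpos i : 0 < δ i := by linarith [hδx i, mem_ball_zero_iff.1 (hxmem i)]
  have hδ1 i : δ i / 2 ≤ 1 := by linarith [hδx i, norm_nonneg (x_ i)]
  have hsub i : closedBall (x_ i) (δ i / 2) ⊆ ball 0 1 :=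
    closedBall_subset_ball' (by linarith [hδx i, hδpos i, dist_zero_right (x_ i)])
  have hδ_half : Tendsto (fun i => δ i / 2) atTop (nhds 0) := by simpa using hδ0.div_const 2
  have hrδ_half : Tendsto (fun i => r i / (δ i / 2)) atTop (nhds 0) := by
    simpa [div_div_eq_mul_div, mul_div_right_comm] using hrδ.mul_const 2
  have hlim := IsLiouvilleSolution.tendsto_radius_mul_setIntegral_pd_mul hsol hs1 hVhol
    (fun i => half_pos (hδpos i)) hδ1 hsub hmax
    (fun i => forall_mem_sphere_mul_of_forall_smul (hδpos i) (hC₁ i)) hr hδ_half hrδ_half hmass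
    (fun i => (mul_pos (hδpos i) hε'.1).le) (fun i => by nlinarith [hδpos i, hε'.2])
    (fun i => forall_mem_sphere_mul_of_forall_smul (hδpos i) (hS i)) 0
  simpa [← mul_assoc, mul_div_cancel₀] using hlim.const_mul 2
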